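/- Let Θ be an index set and, for each θ ∈ Θ, let ψ_{θ,0}, ψ_θ ∈ 𝒮(ℝⁿ), where each ψ_θ satisfies the moment condition of order M_ψ ≥ −1 (the same for all θ). Let φ_0, φ ∈ 𝒮(ℝⁿ) satisfy the Tauberian conditions for some ε′ > 0. Let 0 < p_i < ∞ (i=1,…,n), 0 < q ≤ ∞, and s < (M_ψ+1)·a_0. Let r = (r_1,…,r_n) with r_l > 0 and let M ≥ −1 be an integer with (M+1)a_0 + s > 2(a_1r_1+…+a_nr_n). Assume the four quantities A := sup_θ max{‖D^α 𝓕ψ_θ‖_{L_∞} : |α| ≤ M_ψ+1 or α ≤ ⌈r+2⌉}, B := sup_θ max{‖(1+|ξ|)^{M+1} D^γ 𝓕ψ_θ(ξ)‖_{L_1} : γ ≤ ⌈r+2⌉}, C := sup_θ max{‖D^α 𝓕ψ_{θ,0}‖_{L_∞} : |α| ≤ M_ψ+1 or α ≤ ⌈r+2⌉}, D := sup_θ max{‖(1+|ξ|)^{M+1} D^γ 𝓕ψ_{θ,0}(ξ)‖_{L_1} : γ ≤ ⌈r+2⌉} are all finite. Then there is a constant c > 0 (depending only on M, M_ψ, r,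 s, p̄, q, φ_0, φ, ε′, a, n) such that for every f ∈ 𝒮′(ℝⁿ): ‖(2^{sj}·sup_{θ∈Θ} ψ_{θ,j}^* f)_{j≥0} | L_{p̄}(ℓ_q)‖ ≤ c·(A+B+C+D)·‖(2^{sj} φ_j^* f)_{j≥0} | L_{p̄}(ℓ_q)‖, where both maximal functions are formed with the same r. -/

import Mathlib

open MeasureTheory Complex
open scoped ENNReal NNReal BigOperators

noncomputable section

/-- Points of `ℝⁿ`, written `x = (x 0, …, x (n-1))`. -/
abbrev RV (n : ℕ) := Fin n → ℝ

/-- Tempered distributions `𝒮′(ℝⁿ)`. -/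
abbrev TD (n : ℕ) := SchwartzMap (RV n) ℂ →L[ℂ] ℂ

/-- The Fourier transform `𝓕g(ξ) = ∫ e^{-i x·ξ} g(x) dx`. -/
def FT (n : ℕ) (g : RV n → ℂ) (ξ : RV n) : ℂ :=
  ∫ x : RV n, Complex.exp (-Complex.I * ((∑ i, x i * ξ i : ℝ) : ℂ)) * g x

/-- The partial derivative `∂_i`. -/
def pderiv1 (n : ℕ) (i : Fin n) (g : RV n → ℂ) : RV n → ℂ :=
  fun x => fderiv ℝ g x (Pi.single i 1)

def pderivIter (n : ℕ) (i : Fin n) : ℕ → (RV n → ℂ) → RV n → ℂ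
  | 0, g => g
  | k + 1, g => pderiv1 n i (pderivIter n i k g)

/-- `D^α = (-i ∂_1)^{α_1} ⋯ (-i ∂_n)^{α_n}`. -/
def Dop (n : ℕ) (α : Fin n → ℕ) (g : RV n → ℂ) : RV n → ℂ :=
  fun x => (-Complex.I) ^ (∑ i, α i) *
    ((List.finRange n).foldr (fun i h => pderivIter n i (α i) h) g) x

/-- `anorm` is the anisotropic distance function `|·|_a` :
`anorm 0 = 0`, and for `x ≠ 0`, `anorm x` is the (unique) `t > 0` with
`x 1 ^ 2 / t ^ (2 a 1) + … + x n ^ 2 / t ^ (2 a n) = 1`. -/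
def IsAnorm (n : ℕ) (a : Fin n → ℝ) (anorm : RV n → ℝ) : Prop :=
  anorm 0 = 0 ∧
    ∀ x : RV n, x ≠ 0 → 0 < anorm x ∧ ∑ i, (x i : ℝ) ^ 2 / (anorm x) ^ (2 * a i) = 1

/-- Moment condition of order `M` : `D^α (𝓕ψ)(0) = 0` for all `|α| ≤ M` (void for `M = -1`). -/
def MomentCond (n : ℕ) (M : ℤ) (ψ : RV n → ℂ) : Prop :=
  ∀ α : Fin n → ℕ, (∑ i, (α i : ℤ)) ≤ M → Dop n α (FT n ψ) 0 = 0

/-- Tauberian conditions for `ε > 0` for the pair `(ψ0, ψ)`. -/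
def Tauber (n : ℕ) (anorm : RV n → ℝ) (ψ0 ψ : RV n → ℂ) (ε : ℝ) : Prop :=
  (∀ ξ, anorm ξ < 2 * ε → 0 < ‖FT n ψ0 ξ‖) ∧
    (∀ ξ, ε / 2 < anorm ξ → anorm ξ < 2 * ε → 0 < ‖FT n ψ ξ‖)

/-- The family `φ_j`, `φ_0` at `j = 0` and `φ_j(x) = 2^{j|a|} φ(2^{ja}x)` for `j ≥ 1`. -/
def fam (n : ℕ) (a : Fin n → ℝ) (φ0 φ : RV n → ℂ) : ℕ → RV n → ℂ
  | 0 => φ0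
  | j + 1 => fun x =>
      (((2 : ℝ) ^ (((j : ℝ) + 1) * ∑ i, a i) : ℝ) : ℂ) *
        φ (fun i => (2 : ℝ) ^ (((j : ℝ) + 1) * a i) * x i)

/-- Peetre–Fefferman–Stein maximal function attached to the function `F` (intended: `F = ψ_j * f`). -/
def pfs (n : ℕ) (a r : Fin n → ℝ) (F : RV n → ℂ) (j : ℕ) (x : RV n) : ℝ≥0∞ :=
  ⨆ y : RV n,
    ENNReal.ofReal (‖F y‖ / ∏ l, (1 + (2 : ℝ) ^ ((j : ℝ) * a l) * |x l - y l|) ^ (r l))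

/-- Iterated-integral construction of the mixed Lebesgue norm : integrate out the
coordinates one at a time, first `x 0`, last `x (n-1)`. -/
def mixAux (n : ℕ) (p : Fin n → ℝ≥0∞) : ℕ → ((RV n) → ℝ≥0∞) → (RV n) → ℝ≥0∞
  | 0, F => F
  | l + 1, F => fun x =>
      if h : l < n then
        (if p ⟨l, h⟩ = ∞ then
          essSup (fun t : ℝ => mixAux n p l F (Function.update x ⟨l, h⟩ t)) volume
        else
          (∫⁻ t : ℝ, (mixAux n p l F (Function.update x ⟨l, h⟩ t)) ^ (p ⟨l, h⟩).toReal) ^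
            (1 / (p ⟨l, h⟩).toReal))
      else mixAux n p l F x

/-- The mixed Lebesgue quasi-norm `‖F | L_{p̄}‖` of an extended-nonnegative-valued `F`. -/
def mixedNorm (n : ℕ) (p : Fin n → ℝ≥0∞) (F : RV n → ℝ≥0∞) : ℝ≥0∞ :=
  mixAux n p n F fun _ => 0

/-- `‖(u_k) | L_{p̄}(ℓ_q)‖`. -/
def seqNorm (n : ℕ) (p : Fin n → ℝ≥0∞) (q : ℝ≥0∞) (u : ℕ → RV n → ℝ≥0∞) : ℝ≥0∞ :=
  mixedNorm n p fun x =>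
    if q = ∞ then ⨆ k, u k x else (∑' k, u k x ^ q.toReal) ^ (1 / q.toReal)

/-- Convolution of (Schwartz) functions. -/
def conv2 (n : ℕ) (f g : RV n → ℂ) (x : RV n) : ℂ := ∫ y : RV n, f y * g (x - y)

/-- Schwartz seminorm `p_{α,β}(φ) = sup_x |x^α D^β φ(x)|`, valued in `[0,∞]`. -/
def pSemiE (n : ℕ) (α β : Fin n → ℕ) (g : RV n → ℂ) : ℝ≥0∞ :=
  ⨆ x : RV n, (‖((∏ i, x i ^ α i : ℝ) : ℂ) * Dop n β g x‖₊ : ℝ≥0∞)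

/-- Schwartz seminorm `q_{N,γ}(φ) = ∫ (1+|x|²)^{N/2} |D^γ φ(x)| dx`, valued in `[0,∞]`. -/
def qSemiE (n : ℕ) (N : ℝ) (γ : Fin n → ℕ) (g : RV n → ℂ) : ℝ≥0∞ :=
  ∫⁻ x : RV n, ENNReal.ofReal ((1 + ∑ i, (x i) ^ 2) ^ (N / 2)) * (‖Dop n γ g x‖₊ : ℝ≥0∞)

/-- Iterated Laplacian `Δ^N`. -/
def lapIter (n : ℕ) : ℕ → (RV n → ℂ) → RV n → ℂ
  | 0, g => g
  | N + 1, g => fun x => ∑ i, pderiv1 n i (pderiv1 n i (lapIter n N g)) x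

/-- The box `B_{R,j} = {ξ : |ξ_k| ≤ R 2^{j a_k}}`. -/
def specBox (n : ℕ) (a : Fin n → ℝ) (R : ℝ) (j : ℕ) : Set (RV n) :=
  {ξ | ∀ k, |ξ k| ≤ R * (2 : ℝ) ^ ((j : ℝ) * a k)}

/-- The spectral condition `supp 𝓕u ⊆ B_{R,j}` for a temperate-growth function `u`. -/
def SpecCond (n : ℕ) (a : Fin n → ℝ) (R : ℝ) (j : ℕ) (u : RV n → ℂ) : Prop :=
  ∀ φ : SchwartzMap (RV n) ℂ,
    tsupport (⇑φ) ∩ specBox n a R j = ∅ → (∫ x : RV n, u x * FT n (⇑φ) x) = 0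

/-- The maximal function `u^*` of Section 3. -/
def ustar (n : ℕ) (a r : Fin n → ℝ) (R : ℝ) (j : ℕ) (u : RV n → ℂ) (x : RV n) : ℝ≥0∞ :=
  ⨆ y : RV n,
    ENNReal.ofReal (‖u y‖ / ∏ l, (1 + R * (2 : ℝ) ^ ((j : ℝ) * a l) * |x l - y l|) ^ (r l))

/-!
Inverting the Tauberian conditions produces a compactly supported `χ`, equal to `1` near `0`, and
multipliers `μ₀`, `μ` with `μ₀ 𝓕φ₀ = χ` and `μ 𝓕φ = χ - χ(2^a ·)`, so that
`∑_{k ≤ m} μ_k 𝓕φ_k = χ(2^{-ma} ·)` telescopes and `ψ_j * f` is the sum over `k` of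
`𝓕⁻¹(𝓕ψ_j μ_k) * (φ_k * f)`. Passing to the maximal functions, `φ_k^* f` contributes with the
weighted `L₁` norm of `𝓕⁻¹(𝓕ψ_j μ_k)` as its coefficient. For `k ≤ j` the moment conditions and a
Taylor expansion give that norm the decay `2^{(k-j)(M_ψ+1)a₀}`; for `k > j` the vanishing of `μ`
near `0` turns the weight `(1 + |ξ|)^{M+1}` into the decay `2^{(j-k)(M+1)a₀}`, at the cost of a
factor `2^{2(k-j)∑ a_l r_l}` for comparing the Peetre weights at the scales `j` and `k`. With the
weights `2^{sj}` the coefficients are at most a multiple of `2^{-δ|j-k|}` for some `δ > 0`, and such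
a kernel acts boundedly on `ℓ_q` at each point, hence on `L_{p̄}(ℓ_q)`.
-/

section

open FourierTransform LineDeriv
open scoped SchwartzMap

variable {n : ℕ}

/-! ### The Fourier transform on Schwartz functions -/

/-- Pointwise multiplication of Schwartz functions. -/
instance schwartzMul : Mul 𝓢(RV n, ℂ) :=
  ⟨fun G H => SchwartzMap.pairing (ContinuousLinearMap.mul ℂ ℂ) G H⟩

theorem schwartz_mul_apply (G H : 𝓢(RV n, ℂ)) (x : RV n) : (G * H) x = G x * H x := rfl

/-- Composition with a linear isomorphism, as an isomorphism of Schwartz spaces. -/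
def schwartzCongr {E F : Type*} [NormedAddCommGroup E] [NormedSpace ℝ E] [NormedAddCommGroup F]
    [NormedSpace ℝ F] (e : E ≃L[ℝ] F) : 𝓢(F, ℂ) ≃L[ℂ] 𝓢(E, ℂ) :=
  ContinuousLinearEquiv.equivOfInverse
    (SchwartzMap.compCLMOfContinuousLinearEquiv ℂ e)
    (SchwartzMap.compCLMOfContinuousLinearEquiv ℂ e.symm)
    (fun g => by ext x; simp) (fun g => by ext x; simp)

theorem schwartzCongr_apply {E F : Type*} [NormedAddCommGroup E] [NormedSpace ℝ E]
    [NormedAddCommGroup F] [NormedSpace ℝ F] (e : E ≃L[ℝ] F) (g : 𝓢(F, ℂ)) (x : E) :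
    schwartzCongr e g x = g (e x) := rfl

theorem lineDerivOp_schwartzCongr {E F : Type*} [NormedAddCommGroup E] [NormedSpace ℝ E]
    [NormedAddCommGroup F] [NormedSpace ℝ F] (e : E ≃L[ℝ] F) (g : 𝓢(F, ℂ)) (v : E) :
    ∂_{v} (schwartzCongr e g) = schwartzCongr e (∂_{e v} g) :=
  SchwartzMap.lineDerivOp_compCLMOfContinuousLinearEquiv ℂ v e g

/-- The isomorphism `ξ ↦ ξ / 2π` from `ℝⁿ` to Euclidean space, which turns Mathlib's Fourier
transform (with kernel `e^{-2πi⟨x,ξ⟩}`) into the one with kernel `e^{-ix·ξ}`. -/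
def frequencyScaling (n : ℕ) : RV n ≃L[ℝ] EuclideanSpace ℝ (Fin n) :=
  (ContinuousLinearEquiv.smulLeft (Units.mk0 ((2 * Real.pi)⁻¹ : ℝ) (by positivity))).trans
    (EuclideanSpace.equiv (Fin n) ℝ).symm

theorem frequencyScaling_apply (ξ : RV n) (i : Fin n) :
    frequencyScaling n ξ i = (2 * Real.pi)⁻¹ * ξ i := rfl

theorem frequencyScaling_symm_apply (y : EuclideanSpace ℝ (Fin n)) :
    (frequencyScaling n).symm y = (2 * Real.pi) • EuclideanSpace.equiv (Fin n) ℝ y := by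
  rw [ContinuousLinearEquiv.symm_apply_eq]
  ext i
  rw [frequencyScaling_apply]
  simp [field]

theorem inner_frequencyScaling (y : EuclideanSpace ℝ (Fin n)) (v : RV n) :
    inner ℝ y (frequencyScaling n v) = (2 * Real.pi)⁻¹ * ∑ i, y i * v i := by
  simp only [PiLp.inner_apply, frequencyScaling_apply, RCLike.inner_apply, conj_trivial,
    Finset.mul_sum]
  exact Finset.sum_congr rfl fun i _ => by ring

/-- The Fourier transform `g ↦ ∫ e^{-ix·ξ} g(x) dx` on Schwartz functions. -/
def schwartzFT (n : ℕ) : 𝓢(RV n, ℂ) ≃L[ℂ] 𝓢(RV n, ℂ) :=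
  (schwartzCongr (EuclideanSpace.equiv (Fin n) ℝ)).trans
    ((fourierCLE ℂ 𝓢(EuclideanSpace ℝ (Fin n), ℂ)).trans (schwartzCongr (frequencyScaling n)))

theorem schwartzFT_apply_eq (g : 𝓢(RV n, ℂ)) (ξ : RV n) :
    schwartzFT n g ξ =
      𝓕 (schwartzCongr (EuclideanSpace.equiv (Fin n) ℝ) g) (frequencyScaling n ξ) := rfl

theorem schwartzFT_symm_apply_eq (H : 𝓢(RV n, ℂ)) (x : RV n) :
    (schwartzFT n).symm H x =
      𝓕⁻ (schwartzCongr (frequencyScaling n).symm H)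
        ((EuclideanSpace.equiv (Fin n) ℝ).symm x) := rfl

theorem integral_comp_euclideanEquiv {E : Type*} [NormedAddCommGroup E] [NormedSpace ℝ E]
    (F : RV n → E) : ∫ y, F (EuclideanSpace.equiv (Fin n) ℝ y) = ∫ x, F x :=
  MeasurePreserving.integral_comp (PiLp.volume_preserving_ofLp (Fin n))
    (EuclideanSpace.equiv (Fin n) ℝ).toHomeomorph.measurableEmbedding F

theorem coe_schwartzFT (g : 𝓢(RV n, ℂ)) : ⇑(schwartzFT n g) = FT n g := by
  ext ξ
  rw [schwartzFT_apply_eq, SchwartzMap.fourier_coe, Real.fourier_eq', FT,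
    ← integral_comp_euclideanEquiv]
  refine integral_congr_ae (.of_forall fun y => ?_)
  simp only [inner_frequencyScaling, schwartzCongr_apply, smul_eq_mul]
  congr 2
  have hpi : (Real.pi : ℂ) ≠ 0 := by exact_mod_cast Real.pi_ne_zero
  push_cast
  simp only [EuclideanSpace.equiv, PiLp.coe_continuousLinearEquiv]
  field_simp

theorem schwartzFT_lineDerivOp_apply (v : RV n) (g : 𝓢(RV n, ℂ)) (ξ : RV n) :
    schwartzFT n (∂_{v} g) ξ = I * (∑ i, v i * ξ i : ℝ) * schwartzFT n g ξ := by
  have hderiv : schwartzCongr (EuclideanSpace.equiv (Fin n) ℝ) (∂_{v} g) =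
      ∂_{(EuclideanSpace.equiv (Fin n) ℝ).symm v}
        (schwartzCongr (EuclideanSpace.equiv (Fin n) ℝ) g) := by
    rw [lineDerivOp_schwartzCongr, ContinuousLinearEquiv.apply_symm_apply]
  have hgrowth : (inner ℝ · ((EuclideanSpace.equiv (Fin n) ℝ).symm v) :
      EuclideanSpace ℝ (Fin n) → ℝ).HasTemperateGrowth := by fun_prop
  have hpi : (Real.pi : ℂ) ≠ 0 := by exact_mod_cast Real.pi_ne_zero
  rw [schwartzFT_apply_eq, hderiv, SchwartzMap.fourier_lineDerivOp_eq, schwartzFT_apply_eq,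
    smul_apply, SchwartzMap.smulLeftCLM_apply_apply hgrowth, real_inner_comm,
    inner_frequencyScaling]
  simp only [EuclideanSpace.equiv, PiLp.continuousLinearEquiv_symm_apply, smul_eq_mul,
    real_smul]
  push_cast
  field_simp

theorem schwartzFT_symm_lineDerivOp_apply (v : RV n) (H : 𝓢(RV n, ℂ)) (x : RV n) :
    (schwartzFT n).symm (∂_{v} H) x = -I * (∑ i, x i * v i : ℝ) * (schwartzFT n).symm H x := by
  have hderiv : schwartzCongr (frequencyScaling n).symm (∂_{v} H) =
      ∂_{frequencyScaling n v} (schwartzCongr (frequencyScaling n).symm H) := by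
    rw [lineDerivOp_schwartzCongr, ContinuousLinearEquiv.symm_apply_apply]
  have hgrowth : (inner ℝ · (frequencyScaling n v) :
      EuclideanSpace ℝ (Fin n) → ℝ).HasTemperateGrowth := by fun_prop
  have hpi : (Real.pi : ℂ) ≠ 0 := by exact_mod_cast Real.pi_ne_zero
  rw [schwartzFT_symm_apply_eq, hderiv, SchwartzMap.fourierInv_lineDerivOp_eq,
    schwartzFT_symm_apply_eq, smul_apply, SchwartzMap.smulLeftCLM_apply_apply hgrowth,
    inner_frequencyScaling]
  simp only [EuclideanSpace.equiv, PiLp.continuousLinearEquiv_symm_apply, smul_eq_mul,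
    real_smul]
  push_cast
  field_simp

theorem enorm_schwartzFT_symm_le (H : 𝓢(RV n, ℂ)) (x : RV n) :
    ‖(schwartzFT n).symm H x‖ₑ ≤ ∫⁻ ξ, ‖H ξ‖ₑ := by
  have hscale : |((2 * Real.pi) ^ Module.finrank ℝ (RV n))⁻¹| ≤ 1 := by
    rw [abs_of_nonneg (by positivity)]
    exact inv_le_one_of_one_le₀ (one_le_pow₀ (by linarith [Real.pi_gt_three]))
  have hnorm : ‖(schwartzFT n).symm H x‖ ≤ ∫ ξ, ‖H ξ‖ := calc
    ‖(schwartzFT n).symm H x‖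
      ≤ ∫ y, ‖H ((frequencyScaling n).symm y)‖ := by
        rw [schwartzFT_symm_apply_eq, SchwartzMap.fourierInv_coe, Real.fourierInv_eq]
        refine (norm_integral_le_integral_norm _).trans_eq ?_
        simp only [Circle.norm_smul, schwartzCongr_apply]
    _ = ∫ ξ, ‖H ((2 * Real.pi) • ξ)‖ := by
        simp only [frequencyScaling_symm_apply]
        exact integral_comp_euclideanEquiv fun ξ => ‖H ((2 * Real.pi) • ξ)‖
    _ = |((2 * Real.pi) ^ Module.finrank ℝ (RV n))⁻¹| * ∫ ξ, ‖H ξ‖ :=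
        Measure.integral_comp_smul volume (fun ξ => ‖H ξ‖) _
    _ ≤ ∫ ξ, ‖H ξ‖ := mul_le_of_le_one_left (integral_nonneg fun _ => norm_nonneg _) hscale
  rw [← ofReal_integral_norm_eq_lintegral_enorm H.integrable, ← ofReal_norm]
  exact ENNReal.ofReal_le_ofReal hnorm

/-- Convolution of Schwartz functions, defined on the Fourier side. -/
def schwartzConv (K g : 𝓢(RV n, ℂ)) : 𝓢(RV n, ℂ) :=
  (schwartzFT n).symm (schwartzFT n K * schwartzFT n g)

theorem schwartzConv_apply (K g : 𝓢(RV n, ℂ)) (x : RV n) :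
    schwartzConv K g x = ∫ z, K z * g (x - z) := by
  have hconv : 𝓕⁻ (schwartzCongr (frequencyScaling n).symm (schwartzFT n K * schwartzFT n g)) =
      SchwartzMap.convolution (ContinuousLinearMap.mul ℂ ℂ)
        (schwartzCongr (EuclideanSpace.equiv (Fin n) ℝ) K)
        (schwartzCongr (EuclideanSpace.equiv (Fin n) ℝ) g) := by
    simp only [SchwartzMap.convolution, LinearMap.coe_mk, AddHom.coe_mk,
      ContinuousLinearMap.comp_apply, fourierCLM_apply, fourierInvCLM_apply]
    congr 1
    ext y
    simp [schwartzCongr_apply, schwartz_mul_apply, schwartzFT_apply_eq]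
  rw [schwartzConv, schwartzFT_symm_apply_eq, hconv, SchwartzMap.convolution_apply,
    convolution_def, ← integral_comp_euclideanEquiv]
  simp only [schwartzCongr_apply, map_sub, ContinuousLinearEquiv.apply_symm_apply,
    ContinuousLinearMap.mul_apply']

theorem lineDerivOp_schwartzConv (v : RV n) (K g : 𝓢(RV n, ℂ)) :
    ∂_{v} (schwartzConv K g) = schwartzConv K (∂_{v} g) := by
  apply (schwartzFT n).injective
  ext ξ
  simp only [schwartzFT_lineDerivOp_apply, schwartzConv, ContinuousLinearEquiv.apply_symm_apply,
    schwartz_mul_apply]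
  ring

/-! ### Anisotropic dilations and mixed derivatives -/

/-- The anisotropic scaling `x ↦ 2^{ua} x`. -/
def anisoScale (a : Fin n → ℝ) (u : ℝ) : RV n ≃L[ℝ] RV n :=
  ContinuousLinearEquiv.piCongrRight fun i =>
    ContinuousLinearEquiv.smulLeft (Units.mk0 ((2 : ℝ) ^ (u * a i)) (by positivity))

theorem anisoScale_apply (a : Fin n → ℝ) (u : ℝ) (x : RV n) (i : Fin n) :
    anisoScale a u x i = (2 : ℝ) ^ (u * a i) * x i := rfl

theorem anisoScale_anisoScale (a : Fin n → ℝ) (u v : ℝ) (x : RV n) :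
    anisoScale a u (anisoScale a v x) = anisoScale a (u + v) x := by
  ext i
  rw [anisoScale_apply, anisoScale_apply, anisoScale_apply, ← mul_assoc,
    ← Real.rpow_add two_pos, add_mul]

theorem anisoScale_zero (a : Fin n → ℝ) (x : RV n) : anisoScale a 0 x = x := by
  ext i
  simp [anisoScale_apply]

theorem smul_map_anisoScale (a : Fin n → ℝ) (u : ℝ) :
    ENNReal.ofReal ((2 : ℝ) ^ (u * ∑ i, a i)) • Measure.map (anisoScale a u) volume =
      (volume : Measure (RV n)) := by
  have hdet : (Matrix.diagonal fun i => (2 : ℝ) ^ (u * a i)).det = 2 ^ (u * ∑ i, a i) := by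
    rw [Matrix.det_diagonal, Finset.mul_sum, Real.rpow_sum_of_pos two_pos]
  have hmap : ⇑(Matrix.toLin' (Matrix.diagonal fun i => (2 : ℝ) ^ (u * a i))) =
      anisoScale a u := by
    ext x i
    simp [anisoScale_apply, Matrix.mulVec_diagonal]
  have hpos : (0 : ℝ) < 2 ^ (u * ∑ i, a i) := by positivity
  have := Real.smul_map_diagonal_volume_pi (hdet.trans_ne hpos.ne')
  rwa [hdet, abs_of_pos hpos, hmap] at this

theorem lintegral_comp_anisoScale (a : Fin n → ℝ) (u : ℝ) (F : RV n → ℝ≥0∞) :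
    ENNReal.ofReal ((2 : ℝ) ^ (u * ∑ i, a i)) * ∫⁻ x, F (anisoScale a u x) = ∫⁻ x, F x := by
  conv_rhs => rw [← smul_map_anisoScale a u]
  rw [lintegral_smul_measure, smul_eq_mul,
    (anisoScale a u).toHomeomorph.measurableEmbedding.lintegral_map (g := anisoScale a u)]

theorem integral_comp_anisoScale (a : Fin n → ℝ) (u : ℝ) (F : RV n → ℂ) :
    (((2 : ℝ) ^ (u * ∑ i, a i) : ℝ) : ℂ) * ∫ x, F (anisoScale a u x) = ∫ x, F x := by
  conv_rhs => rw [← smul_map_anisoScale a u]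
  rw [integral_smul_measure, ENNReal.toReal_ofReal (by positivity), real_smul,
    (anisoScale a u).toHomeomorph.measurableEmbedding.integral_map (f := anisoScale a u)]

/-- The dilation `g ↦ g(2^{ua}·)` of Schwartz functions. -/
def dilate (a : Fin n → ℝ) (u : ℝ) : 𝓢(RV n, ℂ) ≃L[ℂ] 𝓢(RV n, ℂ) :=
  schwartzCongr (anisoScale a u)

theorem dilate_apply (a : Fin n → ℝ) (u : ℝ) (g : 𝓢(RV n, ℂ)) (x : RV n) :
    dilate a u g x = g (anisoScale a u x) := rfl

theorem dilate_dilate (a : Fin n → ℝ) (u v : ℝ) (g : 𝓢(RV n, ℂ)) :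
    dilate a u (dilate a v g) = dilate a (v + u) g := by
  ext x
  simp only [dilate_apply, anisoScale_anisoScale]

theorem dilate_zero (a : Fin n → ℝ) (g : 𝓢(RV n, ℂ)) : dilate a 0 g = g := by
  ext x
  rw [dilate_apply, anisoScale_zero]

theorem dilate_mul (a : Fin n → ℝ) (u : ℝ) (g h : 𝓢(RV n, ℂ)) :
    dilate a u (g * h) = dilate a u g * dilate a u h := rfl

theorem sum_anisoScale_mul (a : Fin n → ℝ) (u : ℝ) (x ξ : RV n) :
    ∑ i, anisoScale a u x i * ξ i = ∑ i, x i * anisoScale a u ξ i := by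
  refine Finset.sum_congr rfl fun i _ => ?_
  rw [anisoScale_apply, anisoScale_apply]
  ring

theorem schwartzFT_dilate (a : Fin n → ℝ) (u : ℝ) (g : 𝓢(RV n, ℂ)) :
    (((2 : ℝ) ^ (u * ∑ i, a i) : ℝ) : ℂ) • schwartzFT n (dilate a u g) =
      dilate a (-u) (schwartzFT n g) := by
  ext ξ
  rw [smul_apply, dilate_apply, coe_schwartzFT, coe_schwartzFT, FT, FT,
    ← integral_comp_anisoScale a u fun x =>
      cexp (-I * (∑ i, x i * anisoScale a (-u) ξ i : ℝ)) * g x,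
    smul_eq_mul]
  simp only [sum_anisoScale_mul, anisoScale_anisoScale, add_neg_cancel, anisoScale_zero,
    dilate_apply]

/-- The partial derivative `∂_i` as an operator on Schwartz functions. -/
def partialCLM (i : Fin n) : 𝓢(RV n, ℂ) →L[ℂ] 𝓢(RV n, ℂ) :=
  lineDerivOpCLM ℂ 𝓢(RV n, ℂ) (Pi.single i (1 : ℝ) : RV n)

theorem partialCLM_eq (i : Fin n) (G : 𝓢(RV n, ℂ)) :
    partialCLM i G = ∂_{(Pi.single i 1 : RV n)} G := rfl

theorem commute_partialCLM (i j : Fin n) : Commute (partialCLM i) (partialCLM j) := by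
  ext G x
  have hsecond (v w : RV n) : ∂_{v} (∂_{w} G) x = fderiv ℝ (fderiv ℝ G) x v w := by
    have := SchwartzMap.iteratedLineDerivOp_eq_iteratedFDeriv (m := ![v, w]) (f := G) (x := x)
    rwa [iteratedLineDerivOp_succ_left, iteratedLineDerivOp_one, iteratedFDeriv_two_apply] at this
  have hsymm : IsSymmSndFDerivAt ℝ G x := (G.contDiffAt 2).isSymmSndFDerivAt (by simp)
  exact (hsecond _ _).trans ((hsymm _ _).trans (hsecond _ _).symm)

theorem pairwise_commute_partialCLM_pow (α : Fin n → ℕ) (s : Set (Fin n)) :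
    s.Pairwise (Function.onFun Commute fun i => partialCLM i ^ α i) :=
  fun i _ j _ _ => (commute_partialCLM i j).pow_pow _ _

/-- The mixed partial derivative `∂^α = ∂_1^{α_1} ⋯ ∂_n^{α_n}` on Schwartz functions. -/
def mixedDeriv (α : Fin n → ℕ) : 𝓢(RV n, ℂ) →L[ℂ] 𝓢(RV n, ℂ) :=
  Finset.univ.noncommProd (fun i => partialCLM i ^ α i) (pairwise_commute_partialCLM_pow α _)

theorem mixedDeriv_zero : mixedDeriv (0 : Fin n → ℕ) = 1 :=
  (Finset.noncommProd_eq_pow_card _ _ _ 1 fun _ _ => rfl).trans (one_pow _)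

theorem mixedDeriv_add (α β : Fin n → ℕ) :
    mixedDeriv (α + β) = mixedDeriv α * mixedDeriv β := by
  rw [mixedDeriv, mixedDeriv, mixedDeriv,
    ← Finset.noncommProd_mul_distrib (fun i => partialCLM i ^ α i) (fun i => partialCLM i ^ β i) _ _
      fun i _ j _ _ => (commute_partialCLM i j).pow_pow _ _]
  exact Finset.noncommProd_congr rfl (fun i _ => pow_add _ _ _) _

theorem mixedDeriv_single (i : Fin n) : mixedDeriv (Pi.single i 1) = partialCLM i := by
  rw [mixedDeriv, ← Finset.noncommProd_erase_mul _ (Finset.mem_univ i) _ _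
      (pairwise_commute_partialCLM_pow _ _), Pi.single_eq_same, pow_one,
    Finset.noncommProd_eq_pow_card _ _ _ 1, one_pow, one_mul]
  intro j hj
  rw [Pi.single_eq_of_ne (Finset.ne_of_mem_erase hj), pow_zero]

theorem mixedDeriv_add_single (α : Fin n → ℕ) (i : Fin n) (G : 𝓢(RV n, ℂ)) :
    mixedDeriv (α + Pi.single i 1) G = mixedDeriv α (partialCLM i G) := by
  rw [mixedDeriv_add, mixedDeriv_single, mul_apply_eq_comp]

theorem pderivIter_coe (i : Fin n) (k : ℕ) (G : 𝓢(RV n, ℂ)) :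
    pderivIter n i k G = ⇑((partialCLM i ^ k) G) := by
  induction k with
  | zero => rfl
  | succ k ih =>
    rw [pow_succ', mul_apply_eq_comp, pderivIter, ih]
    rfl

theorem Dop_coe (α : Fin n → ℕ) (G : 𝓢(RV n, ℂ)) (x : RV n) :
    Dop n α G x = (-I) ^ (∑ i, α i) * mixedDeriv α G x := by
  have hfold : ∀ L : List (Fin n), L.foldr (fun i h => pderivIter n i (α i) h) G =
      ⇑((L.map fun i => partialCLM i ^ α i).prod G) := by
    intro L
    induction L with
    | nil => rfl
    | cons i L ih =>
      rw [List.foldr_cons, ih, pderivIter_coe, List.map_cons, List.prod_cons,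
        mul_apply_eq_comp]
  have hprod : mixedDeriv α = ((List.finRange n).map fun i => partialCLM i ^ α i).prod := by
    rw [mixedDeriv, ← Finset.noncommProd_toFinset _ _ (pairwise_commute_partialCLM_pow α _)
      (List.nodup_finRange n)]
    exact Finset.noncommProd_congr (List.toFinset_finRange n).symm (fun _ _ => rfl) _
  rw [Dop, hfold, hprod]

theorem enorm_Dop_FT (α : Fin n → ℕ) (g : 𝓢(RV n, ℂ)) (ξ : RV n) :
    ‖Dop n α (FT n g) ξ‖ₑ = ‖mixedDeriv α (schwartzFT n g) ξ‖ₑ := by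
  rw [← coe_schwartzFT, Dop_coe, enorm_mul, enorm_pow, enorm_neg, ← ofReal_norm I, norm_I,
    ENNReal.ofReal_one, one_pow, one_mul]

theorem multiIndex_induction {P : (Fin n → ℕ) → Prop} (zero : P 0)
    (add_single : ∀ α i, P α → P (α + Pi.single i 1)) (α : Fin n → ℕ) : P α := by
  suffices h : ∀ β, P β → P (β + α) by simpa using h 0 zero
  induction α using Pi.single_induction with
  | zero => simp
  | add α α' hα hα' => exact fun β hβ => by simpa only [add_assoc] using hα' _ (hα β hβ)
  | single i m =>
    induction m with
    | zero => simp
    | succ m ih =>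
      intro β hβ
      rw [Pi.single_add, ← add_assoc]
      exact add_single _ _ (ih β hβ)

theorem partialCLM_mul (i : Fin n) (G H : 𝓢(RV n, ℂ)) :
    partialCLM i (G * H) = partialCLM i G * H + G * partialCLM i H := by
  ext x
  change fderiv ℝ (⇑G * ⇑H) x (Pi.single i 1) = fderiv ℝ G x _ * H x + G x * fderiv ℝ H x _
  rw [fderiv_mul G.differentiableAt H.differentiableAt]
  simp only [_root_.add_apply, _root_.smul_apply, smul_eq_mul]
  ring

theorem norm_mixedDeriv_mul_le (α : Fin n → ℕ) (G H : 𝓢(RV n, ℂ)) (x : RV n) {b c : ℝ}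
    (hG : ∀ β ≤ α, ‖mixedDeriv β G x‖ ≤ b) (hH : ∀ β ≤ α, ‖mixedDeriv β H x‖ ≤ c) :
    ‖mixedDeriv α (G * H) x‖ ≤ 2 ^ (∑ i, α i) * (b * c) := by
  induction α using multiIndex_induction generalizing G H with
  | zero =>
    have hG0 : ‖G x‖ ≤ b := by simpa [mixedDeriv_zero] using hG 0 le_rfl
    have hH0 : ‖H x‖ ≤ c := by simpa [mixedDeriv_zero] using hH 0 le_rfl
    simpa [mixedDeriv_zero, schwartz_mul_apply] using
      mul_le_mul hG0 hH0 (norm_nonneg _) ((norm_nonneg _).trans hG0)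
  | add_single α i ih =>
    have hle : ∀ β ≤ α, β ≤ α + Pi.single i 1 := fun β hβ => hβ.trans le_self_add
    have hle' : ∀ β ≤ α, β + Pi.single i 1 ≤ α + Pi.single i 1 := fun β hβ => by gcongr
    have hleft := ih (partialCLM i G) H
      (fun β hβ => by rw [← mixedDeriv_add_single]; exact hG _ (hle' β hβ))
      (fun β hβ => hH β (hle β hβ))
    have hright := ih G (partialCLM i H) (fun β hβ => hG β (hle β hβ))
      (fun β hβ => by rw [← mixedDeriv_add_single]; exact hH _ (hle' β hβ))
    have hdeg : ∑ k, (α + Pi.single i 1 : Fin n → ℕ) k = (∑ k, α k) + 1 := by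
      simp [Finset.sum_add_distrib]
    rw [mixedDeriv_add_single, partialCLM_mul, map_add, hdeg, pow_succ]
    exact (norm_add_le _ _).trans (by linarith)

theorem partialCLM_dilate (a : Fin n → ℝ) (u : ℝ) (i : Fin n) (G : 𝓢(RV n, ℂ)) :
    partialCLM i (dilate a u G) = ((2 : ℝ) ^ (u * a i)) • dilate a u (partialCLM i G) := by
  have hscale : anisoScale a u (Pi.single i 1) = (2 : ℝ) ^ (u * a i) • Pi.single i 1 := by
    ext k
    rcases eq_or_ne k i with rfl | hk
    · simp [anisoScale_apply]
    · simp [anisoScale_apply, hk]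
  rw [partialCLM_eq, dilate, lineDerivOp_schwartzCongr, hscale, lineDerivOp_left_smul]
  rfl

theorem mixedDeriv_dilate (a : Fin n → ℝ) (u : ℝ) (α : Fin n → ℕ) (G : 𝓢(RV n, ℂ)) :
    mixedDeriv α (dilate a u G) =
      ((2 : ℝ) ^ (u * ∑ i, a i * α i)) • dilate a u (mixedDeriv α G) := by
  induction α using multiIndex_induction generalizing G with
  | zero => simp [mixedDeriv_zero]
  | add_single α i ih =>
    have hdeg : ∑ k, a k * ((α + Pi.single i 1 : Fin n → ℕ) k : ℝ) =
        a i + ∑ k, a k * α k := by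
      simp [mul_add, Finset.sum_add_distrib, Pi.single_apply, add_comm]
    rw [mixedDeriv_add_single, partialCLM_dilate, ContinuousLinearMap.map_smul_of_tower, ih,
      mixedDeriv_add_single, smul_smul, ← Real.rpow_add two_pos, hdeg, mul_add]

theorem norm_schwartzFT_symm_mixedDeriv (α : Fin n → ℕ) (H : 𝓢(RV n, ℂ)) (x : RV n) :
    ‖(schwartzFT n).symm (mixedDeriv α H) x‖ =
      (∏ i, |x i| ^ α i) * ‖(schwartzFT n).symm H x‖ := by
  induction α using multiIndex_induction generalizing H with
  | zero => simp [mixedDeriv_zero]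
  | add_single α i ih =>
    have hsingle : ∏ k, |x k| ^ (Pi.single i 1 : Fin n → ℕ) k = |x i| := by
      simp [Pi.single_apply]
    rw [mixedDeriv_add_single, ih, partialCLM_eq, schwartzFT_symm_lineDerivOp_apply]
    simp only [Pi.add_apply, pow_add, Finset.prod_mul_distrib, hsingle]
    simp [Pi.single_apply, mul_assoc]

/-! ### Peetre weights and kernel estimates -/

/-- The Peetre weight `∏_l (1 + 2^{u a_l} |z_l|)^{r_l}` at scale `u`. -/
def peetreWeight (a r : Fin n → ℝ) (u : ℝ) (z : RV n) : ℝ :=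
  ∏ l, (1 + (2 : ℝ) ^ (u * a l) * |z l|) ^ r l

theorem peetreWeight_pos (a r : Fin n → ℝ) (u : ℝ) (z : RV n) : 0 < peetreWeight a r u z :=
  Finset.prod_pos fun _ _ => by positivity

theorem measurable_peetreWeight (a r : Fin n → ℝ) (u : ℝ) : Measurable (peetreWeight a r u) := by
  unfold peetreWeight
  fun_prop

theorem peetreWeight_anisoScale (a r : Fin n → ℝ) (u v : ℝ) (z : RV n) :
    peetreWeight a r u (anisoScale a v z) = peetreWeight a r (u + v) z := by
  refine Finset.prod_congr rfl fun l _ => ?_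
  rw [anisoScale_apply, abs_mul, abs_of_pos (by positivity), ← mul_assoc,
    ← Real.rpow_add two_pos, add_mul]

theorem lintegral_prod_one_add_abs_rpow_ne_top :
    ∫⁻ z : RV n, ENNReal.ofReal (∏ l, (1 + |z l|) ^ (-2 : ℝ)) ≠ ∞ := by
  have one_dim : Integrable fun t : ℝ => (1 + |t|) ^ (-2 : ℝ) := by
    simpa using integrable_one_add_norm (E := ℝ) (μ := volume) (r := 2) (by simp)
  have prod : Integrable fun z : RV n => ∏ l, (1 + |z l|) ^ (-2 : ℝ) :=
    Integrable.fintype_prod (f := fun _ t => (1 + |t|) ^ (-2 : ℝ)) fun _ => one_dim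
  exact ((hasFiniteIntegral_iff_ofReal
    (.of_forall fun z => Finset.prod_nonneg fun l _ => by positivity)).1 prod.2).ne

theorem one_add_abs_rpow_le {t r : ℝ} {N : ℕ} (hN : r + 2 ≤ N) :
    (1 + |t|) ^ r ≤ 2 ^ N * (1 + |t|) ^ (-2 : ℝ) * |t| ^ (if |t| ≤ 1 then 0 else N) := by
  have ht : 0 ≤ |t| := abs_nonneg t
  have power : (1 + |t|) ^ N ≤ 2 ^ N * |t| ^ (if |t| ≤ 1 then 0 else N) := by
    split_ifs with h
    · simpa using pow_le_pow_left₀ (by positivity) (by linarith : 1 + |t| ≤ 2) N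
    · rw [← mul_pow]
      exact pow_le_pow_left₀ (by positivity) (by linarith) _
  calc (1 + |t|) ^ r ≤ (1 + |t|) ^ (-2 + N : ℝ) :=
        Real.rpow_le_rpow_of_exponent_le (by linarith) (by linarith)
    _ = (1 + |t|) ^ (-2 : ℝ) * (1 + |t|) ^ N := by
        rw [Real.rpow_add (by positivity), Real.rpow_natCast]
    _ ≤ (1 + |t|) ^ (-2 : ℝ) * (2 ^ N * |t| ^ (if |t| ≤ 1 then 0 else N)) := by gcongr
    _ = _ := by ring

theorem exists_peetreWeight_le_monomial (a : Fin n → ℝ) {r : Fin n → ℝ} {N : Fin n → ℕ}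
    (hN : ∀ l, r l + 2 ≤ N l) (z : RV n) :
    ∃ α ≤ N, peetreWeight a r 0 z ≤
      2 ^ (∑ l, N l) * (∏ l, (1 + |z l|) ^ (-2 : ℝ)) * ∏ l, |z l| ^ α l := by
  refine ⟨fun l => if |z l| ≤ 1 then 0 else N l, fun l => ?_, ?_⟩
  · dsimp only
    split_ifs <;> simp
  · rw [← Finset.prod_pow_eq_pow_sum, ← Finset.prod_mul_distrib, ← Finset.prod_mul_distrib]
    refine Finset.prod_le_prod (fun l _ => by positivity) fun l _ => ?_
    rw [zero_mul, Real.rpow_zero, one_mul]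
    exact one_add_abs_rpow_le (hN l)

theorem exists_lintegral_peetreWeight_schwartzFT_symm_le (a : Fin n → ℝ) {r : Fin n → ℝ}
    {N : Fin n → ℕ} (hN : ∀ l, r l + 2 ≤ N l) :
    ∃ c : ℝ≥0, ∀ (H : 𝓢(RV n, ℂ)) (Y : ℝ≥0∞), (∀ α ≤ N, ∫⁻ ξ, ‖mixedDeriv α H ξ‖ₑ ≤ Y) →
      ∫⁻ z, ENNReal.ofReal (peetreWeight a r 0 z) * ‖(schwartzFT n).symm H z‖ₑ ≤ c * Y := by
  set W := ∫⁻ z : RV n, ENNReal.ofReal (∏ l, (1 + |z l|) ^ (-2 : ℝ)) with hW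
  have hW_fin : W ≠ ∞ := lintegral_prod_one_add_abs_rpow_ne_top
  refine ⟨2 ^ (∑ l, N l) * W.toNNReal, fun H Y hY => ?_⟩
  have pointwise (z : RV n) :
      ENNReal.ofReal (peetreWeight a r 0 z) * ‖(schwartzFT n).symm H z‖ₑ ≤
        2 ^ (∑ l, N l) * Y * ENNReal.ofReal (∏ l, (1 + |z l|) ^ (-2 : ℝ)) := by
    obtain ⟨α, hα, weight_le⟩ := exists_peetreWeight_le_monomial a hN z
    have monomial : ENNReal.ofReal (∏ l, |z l| ^ α l) * ‖(schwartzFT n).symm H z‖ₑ ≤ Y := by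
      rw [← ofReal_norm, ← ENNReal.ofReal_mul (by positivity), ← norm_schwartzFT_symm_mixedDeriv,
        ofReal_norm]
      exact (enorm_schwartzFT_symm_le _ z).trans (hY α hα)
    calc _ ≤ ENNReal.ofReal (2 ^ (∑ l, N l) * (∏ l, (1 + |z l|) ^ (-2 : ℝ)) *
            ∏ l, |z l| ^ α l) * ‖(schwartzFT n).symm H z‖ₑ := by gcongr
      _ = 2 ^ (∑ l, N l) * ENNReal.ofReal (∏ l, (1 + |z l|) ^ (-2 : ℝ)) *
            (ENNReal.ofReal (∏ l, |z l| ^ α l) * ‖(schwartzFT n).symm H z‖ₑ) := by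
          rw [ENNReal.ofReal_mul (by positivity), ENNReal.ofReal_mul (by positivity),
            ENNReal.ofReal_pow zero_le_two]
          simp only [ENNReal.ofReal_ofNat, mul_assoc]
      _ ≤ _ := by
          rw [mul_right_comm]
          gcongr
  refine (lintegral_mono pointwise).trans_eq ?_
  rw [lintegral_const_mul _ (by fun_prop), ← hW]
  push_cast
  rw [ENNReal.coe_toNNReal hW_fin]
  ring

theorem enorm_mixedDeriv_mul_le {N α : Fin n → ℕ} (hα : α ≤ N) {G H : 𝓢(RV n, ℂ)} {w : ℝ}
    {ξ : RV n} (hG : ∀ β ≤ N, ‖mixedDeriv β G ξ‖ ≤ w) :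
    ‖mixedDeriv α (G * H) ξ‖ₑ ≤
      2 ^ (∑ i, N i) * ∑ γ ∈ Finset.Iic N, ENNReal.ofReal w * ‖mixedDeriv γ H ξ‖ₑ := by
  have hw : 0 ≤ w := (norm_nonneg _).trans (hG 0 fun _ => Nat.zero_le _)
  have leibniz := norm_mixedDeriv_mul_le α G H ξ (fun β hβ => hG β (hβ.trans hα))
    (fun β hβ => Finset.single_le_sum (f := fun γ => ‖mixedDeriv γ H ξ‖)
      (fun _ _ => norm_nonneg _) (Finset.mem_Iic.2 (hβ.trans hα)))
  have bound : ‖mixedDeriv α (G * H) ξ‖ ≤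
      2 ^ (∑ i, N i) * ∑ γ ∈ Finset.Iic N, w * ‖mixedDeriv γ H ξ‖ := by
    rw [← Finset.mul_sum]
    refine leibniz.trans ?_
    gcongr with i
    · norm_num
    · exact hα i
  rw [← ofReal_norm]
  refine (ENNReal.ofReal_le_ofReal bound).trans_eq ?_
  rw [ENNReal.ofReal_mul (by positivity), ENNReal.ofReal_pow zero_le_two,
    ENNReal.ofReal_sum_of_nonneg fun _ _ => by positivity]
  simp only [ENNReal.ofReal_ofNat, ENNReal.ofReal_mul hw, ofReal_norm]

theorem exists_lintegral_peetreWeight_schwartzFT_symm_mul_le (a : Fin n → ℝ) {r : Fin n → ℝ}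
    {N : Fin n → ℕ} (hN : ∀ l, r l + 2 ≤ N l) :
    ∃ c : ℝ≥0, ∀ (G H : 𝓢(RV n, ℂ)) (b : ℝ) (w : RV n → ℝ), 0 ≤ b → Measurable w →
      (∀ β ≤ N, ∀ ξ, ‖mixedDeriv β G ξ‖ ≤ b * w ξ) →
      ∫⁻ z, ENNReal.ofReal (peetreWeight a r 0 z) * ‖(schwartzFT n).symm (G * H) z‖ₑ ≤
        c * (ENNReal.ofReal b *
          ∑ γ ∈ Finset.Iic N, ∫⁻ ξ, ENNReal.ofReal (w ξ) * ‖mixedDeriv γ H ξ‖ₑ) := by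
  obtain ⟨c, hc⟩ := exists_lintegral_peetreWeight_schwartzFT_symm_le a hN
  refine ⟨c * 2 ^ (∑ i, N i), fun G H b w hb hw hG => ?_⟩
  have meas (γ : Fin n → ℕ) :
      Measurable fun ξ => ENNReal.ofReal (w ξ) * ‖mixedDeriv γ H ξ‖ₑ :=
    hw.ennreal_ofReal.mul (mixedDeriv γ H).continuous.measurable.enorm
  refine (hc (G * H) (2 ^ (∑ i, N i) * (ENNReal.ofReal b * ∑ γ ∈ Finset.Iic N,
    ∫⁻ ξ, ENNReal.ofReal (w ξ) * ‖mixedDeriv γ H ξ‖ₑ)) fun α hα => ?_).trans_eq ?_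
  · refine (lintegral_mono fun ξ => enorm_mixedDeriv_mul_le hα fun β hβ => hG β hβ ξ).trans_eq ?_
    simp only [ENNReal.ofReal_mul hb, mul_assoc, ← Finset.mul_sum _ _ (ENNReal.ofReal b)]
    rw [lintegral_const_mul _ (.const_mul (Finset.measurable_sum _ fun γ _ => meas γ) _),
      lintegral_const_mul _ (Finset.measurable_sum _ fun γ _ => meas γ),
      lintegral_finsetSum _ fun γ _ => meas γ]
  · push_cast
    ring

theorem norm_fderiv_le_of_forall_partialCLM {G : 𝓢(RV n, ℂ)} {y : RV n} {b : ℝ} (hb : 0 ≤ b)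
    (hG : ∀ i, ‖partialCLM i G y‖ ≤ b) : ‖fderiv ℝ G y‖ ≤ n * b := by
  refine ContinuousLinearMap.opNorm_le_bound _ (by positivity) fun v => ?_
  have coord (i : Fin n) : ‖fderiv ℝ G y (v i • Pi.single i 1)‖ ≤ b * ‖v‖ := by
    rw [map_smul, norm_smul, mul_comm]
    have := hG i
    rw [partialCLM_eq, SchwartzMap.lineDerivOp_apply_eq_fderiv] at this
    gcongr
    exact norm_le_pi_norm v i
  calc ‖fderiv ℝ G y v‖ = ‖∑ i, fderiv ℝ G y (v i • Pi.single i 1)‖ := by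
        rw [← map_sum]
        simp only [← Pi.single_smul', smul_eq_mul, mul_one, Finset.univ_sum_single]
    _ ≤ ∑ _i : Fin n, b * ‖v‖ := (norm_sum_le _ _).trans (Finset.sum_le_sum fun i _ => coord i)
    _ = n * b * ‖v‖ := by
        rw [Finset.sum_const, Finset.card_univ, Fintype.card_fin, nsmul_eq_mul, mul_assoc]

theorem norm_le_mul_norm_pow_of_mixedDeriv_eq_zero {m : ℕ} {X : ℝ} (hX : 0 ≤ X)
    {G : 𝓢(RV n, ℂ)} (h_zero : ∀ γ : Fin n → ℕ, ∑ i, γ i < m → mixedDeriv γ G 0 = 0)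
    (h_bound : ∀ γ : Fin n → ℕ, ∑ i, γ i = m → ∀ x, ‖mixedDeriv γ G x‖ ≤ X) (x : RV n) :
    ‖G x‖ ≤ (n * ‖x‖) ^ m * X := by
  induction m generalizing G x with
  | zero => simpa [mixedDeriv_zero] using h_bound 0 (by simp) x
  | succ m ih =>
    have degree (γ : Fin n → ℕ) (i : Fin n) :
        ∑ k, (γ + Pi.single i 1 : Fin n → ℕ) k = ∑ k, γ k + 1 := by
      simp [Finset.sum_add_distrib]
    have partial_le (i : Fin n) (y : RV n) : ‖partialCLM i G y‖ ≤ (n * ‖y‖) ^ m * X :=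
      ih (fun γ hγ => by rw [← mixedDeriv_add_single]; exact h_zero _ (by rw [degree]; omega))
        (fun γ hγ z => by rw [← mixedDeriv_add_single]; exact h_bound _ (by rw [degree, hγ]) z) y
    have fderiv_le : ∀ y ∈ Metric.closedBall (0 : RV n) ‖x‖,
        ‖fderiv ℝ G y‖ ≤ n * ((n * ‖x‖) ^ m * X) := fun y hy =>
      norm_fderiv_le_of_forall_partialCLM (by positivity) fun i => (partial_le i y).trans (by
        have := mem_closedBall_zero_iff.1 hy
        gcongr)
    have mean_value := (convex_closedBall (0 : RV n) ‖x‖).norm_image_sub_le_of_norm_fderiv_le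
      (𝕜 := ℝ) (fun y _ => G.differentiableAt) fderiv_le
      (Metric.mem_closedBall_self (norm_nonneg x)) (mem_closedBall_zero_iff.2 le_rfl)
    have at_zero : G 0 = 0 := by simpa [mixedDeriv_zero] using h_zero 0 (by simp)
    rw [at_zero, sub_zero, sub_zero] at mean_value
    exact mean_value.trans_eq (by ring)

theorem two_rpow_neg_mul_sum_le {a : Fin n → ℝ} {a₀ : ℝ} (ha : ∀ i, a₀ ≤ a i) {u : ℝ} (hu : 0 ≤ u)
    (β : Fin n → ℕ) : (2 : ℝ) ^ (-u * ∑ i, a i * β i) ≤ 2 ^ (-u * (a₀ * (∑ i, β i : ℕ))) := by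
  have : a₀ * (∑ i, β i : ℕ) ≤ ∑ i, a i * β i := by
    push_cast
    rw [Finset.mul_sum]
    exact Finset.sum_le_sum fun i _ => mul_le_mul_of_nonneg_right (ha i) (by positivity)
  exact Real.rpow_le_rpow_of_exponent_le one_le_two
    (mul_le_mul_of_nonpos_left this (neg_nonpos.2 hu))

theorem norm_anisoScale_neg_le {a : Fin n → ℝ} {a₀ : ℝ} (ha : ∀ i, a₀ ≤ a i) {u : ℝ}
    (hu : 0 ≤ u) (ξ : RV n) : ‖anisoScale a (-u) ξ‖ ≤ 2 ^ (-u * a₀) * ‖ξ‖ := by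
  refine (pi_norm_le_iff_of_nonneg (by positivity)).2 fun i => ?_
  rw [anisoScale_apply, norm_mul, Real.norm_of_nonneg (by positivity)]
  exact mul_le_mul (Real.rpow_le_rpow_of_exponent_le one_le_two
      (mul_le_mul_of_nonpos_left (ha i) (neg_nonpos.2 hu)))
    (norm_le_pi_norm ξ i) (norm_nonneg _) (by positivity)

theorem norm_mixedDeriv_dilate (a : Fin n → ℝ) (u : ℝ) (α : Fin n → ℕ) (G : 𝓢(RV n, ℂ))
    (ξ : RV n) : ‖mixedDeriv α (dilate a u G) ξ‖ =
      2 ^ (u * ∑ i, a i * α i) * ‖mixedDeriv α G (anisoScale a u ξ)‖ := by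
  rw [mixedDeriv_dilate, _root_.smul_apply, norm_smul, dilate_apply,
    Real.norm_of_nonneg (by positivity)]

theorem norm_mixedDeriv_dilate_neg_le_of_moments {a : Fin n → ℝ} {a₀ : ℝ} (ha : ∀ i, a₀ ≤ a i)
    {K : ℕ} {G : 𝓢(RV n, ℂ)} {X : ℝ} (hX : 0 ≤ X)
    (h_zero : ∀ γ : Fin n → ℕ, ∑ i, γ i < K → mixedDeriv γ G 0 = 0)
    (h_bound : ∀ γ : Fin n → ℕ, ∑ i, γ i ≤ K → ∀ x, ‖mixedDeriv γ G x‖ ≤ X)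
    {u : ℝ} (hu : 0 ≤ u) {β : Fin n → ℕ} (hβ : ∑ i, β i ≤ K) (ξ : RV n) :
    ‖mixedDeriv β (dilate a (-u) G) ξ‖ ≤
      2 ^ (-u * (K * a₀)) * X * ((n + 1) * (1 + ‖ξ‖)) ^ K := by
  obtain ⟨m, rfl⟩ := Nat.exists_eq_add_of_le hβ
  have taylor : ‖mixedDeriv β G (anisoScale a (-u) ξ)‖ ≤
      (n * (2 ^ (-u * a₀) * ‖ξ‖)) ^ m * X := by
    refine (norm_le_mul_norm_pow_of_mixedDeriv_eq_zero (m := m) hX (fun γ hγ => ?_)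
      (fun γ hγ x => ?_) _).trans ?_
    · rw [← mul_apply_eq_comp, ← mixedDeriv_add]
      exact h_zero _ (by simp only [Pi.add_apply, Finset.sum_add_distrib]; omega)
    · rw [← mul_apply_eq_comp, ← mixedDeriv_add]
      exact h_bound _ (by simp only [Pi.add_apply, Finset.sum_add_distrib]; omega) x
    · gcongr
      exact norm_anisoScale_neg_le ha hu ξ
  have exponents : (2 : ℝ) ^ (-u * ((∑ i, β i + m : ℕ) * a₀)) =
      2 ^ (-u * (a₀ * (∑ i, β i : ℕ))) * (2 ^ (-u * a₀)) ^ m := by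
    rw [← Real.rpow_mul_natCast zero_le_two, ← Real.rpow_add two_pos]
    congr 1
    push_cast
    ring
  have power : (n * ‖ξ‖) ^ m ≤ ((n + 1) * (1 + ‖ξ‖)) ^ (∑ i, β i + m) :=
    (pow_le_pow_left₀ (by positivity) (by gcongr <;> linarith) m).trans
      (pow_le_pow_right₀ (one_le_mul_of_one_le_of_one_le (by simp) (by simp)) (by omega))
  rw [norm_mixedDeriv_dilate, exponents]
  calc _ ≤ 2 ^ (-u * (a₀ * (∑ i, β i : ℕ))) * ((n * (2 ^ (-u * a₀) * ‖ξ‖)) ^ m * X) :=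
        mul_le_mul (two_rpow_neg_mul_sum_le ha hu β) taylor (norm_nonneg _) (by positivity)
    _ = 2 ^ (-u * (a₀ * (∑ i, β i : ℕ))) * (2 ^ (-u * a₀)) ^ m * X * (n * ‖ξ‖) ^ m := by ring
    _ ≤ _ := by gcongr

theorem norm_mixedDeriv_dilate_neg_le_of_le_sum {a : Fin n → ℝ} {a₀ : ℝ} (ha₀ : 0 ≤ a₀)
    (ha : ∀ i, a₀ ≤ a i) {K : ℕ} {G : 𝓢(RV n, ℂ)} {X : ℝ} {β : Fin n → ℕ} (hβ : K ≤ ∑ i, β i)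
    (h_bound : ∀ x, ‖mixedDeriv β G x‖ ≤ X) {u : ℝ} (hu : 0 ≤ u) (ξ : RV n) :
    ‖mixedDeriv β (dilate a (-u) G) ξ‖ ≤ 2 ^ (-u * (K * a₀)) * X := by
  have decay : (2 : ℝ) ^ (-u * ∑ i, a i * β i) ≤ 2 ^ (-u * (K * a₀)) := by
    refine (two_rpow_neg_mul_sum_le ha hu β).trans
      (Real.rpow_le_rpow_of_exponent_le one_le_two ?_)
    refine mul_le_mul_of_nonpos_left ?_ (neg_nonpos.2 hu)
    rw [mul_comm]
    gcongr
  rw [norm_mixedDeriv_dilate]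
  exact mul_le_mul decay (h_bound _) (norm_nonneg _) (by positivity)

theorem lintegral_one_add_norm_pow_mul_enorm_ne_top (K : ℕ) (g : 𝓢(RV n, ℂ)) :
    ∫⁻ ξ, ENNReal.ofReal ((1 + ‖ξ‖) ^ K) * ‖g ξ‖ₑ ≠ ∞ := by
  have expand : (fun ξ => (1 + ‖ξ‖) ^ K * ‖g ξ‖) =
      fun ξ => ∑ m ∈ Finset.range (K + 1), (K.choose m : ℝ) * (‖ξ‖ ^ m * ‖g ξ‖) := by
    ext ξ
    rw [add_comm, add_pow, Finset.sum_mul]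
    refine Finset.sum_congr rfl fun m _ => ?_
    ring
  have integrable : Integrable fun ξ => (1 + ‖ξ‖) ^ K * ‖g ξ‖ := by
    rw [expand]
    exact integrable_finsetSum _ fun m _ =>
      (SchwartzMap.integrable_pow_mul volume g m).const_mul _
  have := ((hasFiniteIntegral_iff_ofReal (.of_forall fun ξ => by positivity)).1 integrable.2).ne
  simpa only [ENNReal.ofReal_mul (pow_nonneg (add_nonneg zero_le_one (norm_nonneg _)) K),
    ofReal_norm] using this

theorem exists_lintegral_peetreWeight_dilate_mul_le {a : Fin n → ℝ} {a₀ : ℝ} (ha₀ : 0 ≤ a₀)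
    (ha : ∀ i, a₀ ≤ a i) {r : Fin n → ℝ} {N : Fin n → ℕ} (hN : ∀ l, r l + 2 ≤ N l) (K : ℕ)
    (μ : 𝓢(RV n, ℂ)) :
    ∃ c : ℝ≥0, ∀ (G : 𝓢(RV n, ℂ)) (X u : ℝ), 0 ≤ X → 0 ≤ u →
      (0 < u → ∀ γ : Fin n → ℕ, ∑ i, γ i < K → mixedDeriv γ G 0 = 0) →
      (∀ γ : Fin n → ℕ, (∑ i, γ i ≤ K ∨ γ ≤ N) → ∀ x, ‖mixedDeriv γ G x‖ ≤ X) →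
      ∫⁻ z, ENNReal.ofReal (peetreWeight a r 0 z) *
          ‖(schwartzFT n).symm (dilate a (-u) G * μ) z‖ₑ ≤
        c * ENNReal.ofReal (2 ^ (-u * (K * a₀)) * X) := by
  obtain ⟨c, hc⟩ := exists_lintegral_peetreWeight_schwartzFT_symm_mul_le a hN
  set W := ∑ γ ∈ Finset.Iic N, ∫⁻ ξ, ENNReal.ofReal ((1 + ‖ξ‖) ^ K) * ‖mixedDeriv γ μ ξ‖ₑ with hW
  have hW_fin : W ≠ ∞ :=
    ENNReal.sum_ne_top.2 fun γ _ => lintegral_one_add_norm_pow_mul_enorm_ne_top K _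
  refine ⟨c * ((n + 1) ^ K * W.toNNReal), fun G X u hX hu h_zero h_bound => ?_⟩
  have symbol_le (β : Fin n → ℕ) (hβ : β ≤ N) (ξ : RV n) :
      ‖mixedDeriv β (dilate a (-u) G) ξ‖ ≤
        2 ^ (-u * (K * a₀)) * X * (n + 1) ^ K * (1 + ‖ξ‖) ^ K := by
    have one_le : 1 ≤ ((n + 1) * (1 + ‖ξ‖)) ^ K :=
      one_le_pow₀ (one_le_mul_of_one_le_of_one_le (by simp) (by simp))
    rw [mul_assoc, ← mul_pow]
    obtain rfl | hu := hu.eq_or_lt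
    · rw [neg_zero, dilate_zero, zero_mul, Real.rpow_zero, one_mul]
      exact (h_bound β (.inr hβ) ξ).trans (le_mul_of_one_le_right hX one_le)
    obtain hK | hK := le_total (∑ i, β i) K
    · exact norm_mixedDeriv_dilate_neg_le_of_moments ha hX (h_zero hu)
        (fun γ hγ => h_bound γ (.inl hγ)) hu.le hK ξ
    · exact (norm_mixedDeriv_dilate_neg_le_of_le_sum ha₀ ha hK (h_bound β (.inr hβ)) hu.le
        ξ).trans (le_mul_of_one_le_right (by positivity) one_le)
  refine (hc _ μ _ (fun ξ => (1 + ‖ξ‖) ^ K) (by positivity) (by fun_prop) symbol_le).trans_eq ?_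
  rw [← hW, ENNReal.ofReal_mul (by positivity), ENNReal.ofReal_pow (by positivity),
    ← Nat.cast_succ, ENNReal.ofReal_natCast]
  push_cast
  rw [ENNReal.coe_toNNReal hW_fin]
  ring

theorem mixedDeriv_apply_eq_zero {s : Set (RV n)} (hs : IsOpen s) {μ : 𝓢(RV n, ℂ)}
    (hμ : ∀ x ∈ s, μ x = 0) (γ : Fin n → ℕ) : ∀ x ∈ s, mixedDeriv γ μ x = 0 := by
  induction γ using multiIndex_induction generalizing μ with
  | zero => simpa [mixedDeriv_zero] using hμ
  | add_single γ i ih =>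
    rw [mixedDeriv_add_single]
    refine ih fun x hx => ?_
    have : ⇑μ =ᶠ[nhds x] fun _ => 0 := by filter_upwards [hs.mem_nhds hx] with y hy using hμ y hy
    rw [partialCLM_eq, SchwartzMap.lineDerivOp_apply_eq_fderiv, this.fderiv_eq]
    simp

theorem norm_le_sqrt_sum_sq (ξ : RV n) : ‖ξ‖ ≤ √(∑ i, ξ i ^ 2) :=
  (pi_norm_le_iff_of_nonneg (by positivity)).2 fun i => Real.abs_le_sqrt
    (Finset.single_le_sum (f := fun i => ξ i ^ 2) (fun _ _ => sq_nonneg _) (Finset.mem_univ i))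

theorem exists_norm_mixedDeriv_le (N : Fin n → ℕ) (μ : 𝓢(RV n, ℂ)) :
    ∃ S : ℝ≥0, ∀ γ ≤ N, ∀ ξ, ‖mixedDeriv γ μ ξ‖ ≤ S := by
  refine ⟨⟨∑ γ ∈ Finset.Iic N, SchwartzMap.seminorm ℝ 0 0 (mixedDeriv γ μ),
    Finset.sum_nonneg fun _ _ => apply_nonneg _ _⟩, fun γ hγ ξ => ?_⟩
  exact (SchwartzMap.norm_le_seminorm ℝ _ ξ).trans (Finset.single_le_sum
    (f := fun γ => SchwartzMap.seminorm ℝ 0 0 (mixedDeriv γ μ))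
    (fun _ _ => apply_nonneg _ _) (Finset.mem_Iic.2 hγ))

theorem exists_norm_mixedDeriv_dilate_neg_le_of_vanish_near_zero {a : Fin n → ℝ} {a₀ : ℝ}
    (ha₀ : 0 ≤ a₀) (ha : ∀ i, a₀ ≤ a i) (N : Fin n → ℕ) {L : ℝ} (hL : 0 ≤ L) {μ : 𝓢(RV n, ℂ)}
    {δ : ℝ} (hδ : 0 < δ) (hμ : ∀ x : RV n, ‖x‖ < δ → μ x = 0) :
    ∃ S : ℝ≥0, ∀ u : ℝ, 0 ≤ u → ∀ γ ≤ N, ∀ ξ, ‖mixedDeriv γ (dilate a (-u) μ) ξ‖ ≤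
      S * 2 ^ (-u * (L * a₀)) * (1 + √(∑ i, ξ i ^ 2)) ^ L := by
  obtain ⟨S, hS⟩ := exists_norm_mixedDeriv_le N μ
  refine ⟨S * ⟨δ⁻¹ ^ L, by positivity⟩, fun u hu γ hγ ξ => ?_⟩
  have exponent_le_one : (2 : ℝ) ^ (-u * ∑ i, a i * γ i) ≤ 1 :=
    Real.rpow_le_one_of_one_le_of_nonpos one_le_two (mul_nonpos_of_nonpos_of_nonneg
      (neg_nonpos.2 hu) (Finset.sum_nonneg fun i _ =>
        mul_nonneg (ha₀.trans (ha i)) (Nat.cast_nonneg _)))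
  change _ ≤ S * δ⁻¹ ^ L * _ * _
  rw [norm_mixedDeriv_dilate]
  obtain h_near | h_far := lt_or_ge ‖anisoScale a (-u) ξ‖ δ
  · rw [mixedDeriv_apply_eq_zero Metric.isOpen_ball (fun x hx => hμ x (mem_ball_zero_iff.1 hx)) γ _
      (mem_ball_zero_iff.2 h_near), norm_zero, mul_zero]
    positivity
  have one_le : 1 ≤ δ⁻¹ * (2 ^ (-u * a₀) * (1 + √(∑ i, ξ i ^ 2))) := by
    rw [inv_mul_eq_div, le_div_iff₀ hδ, one_mul]
    refine h_far.trans ((norm_anisoScale_neg_le ha hu ξ).trans ?_)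
    gcongr
    linarith [norm_le_sqrt_sum_sq ξ]
  have one_le_rpow := Real.one_le_rpow one_le hL
  rw [Real.mul_rpow (by positivity) (by positivity), Real.mul_rpow (by positivity) (by positivity),
    ← Real.rpow_mul zero_le_two, show -u * a₀ * L = -u * (L * a₀) by ring] at one_le_rpow
  calc _ ≤ 1 * (S : ℝ) := mul_le_mul exponent_le_one (hS γ hγ _) (norm_nonneg _) zero_le_one
    _ ≤ S * (δ⁻¹ ^ L * (2 ^ (-u * (L * a₀)) * (1 + √(∑ i, ξ i ^ 2)) ^ L)) := by
        rw [one_mul]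
        exact le_mul_of_one_le_right S.2 one_le_rpow
    _ = _ := by ring

theorem exists_lintegral_peetreWeight_mul_dilate_le {a : Fin n → ℝ} {a₀ : ℝ} (ha₀ : 0 ≤ a₀)
    (ha : ∀ i, a₀ ≤ a i) {r : Fin n → ℝ} {N : Fin n → ℕ} (hN : ∀ l, r l + 2 ≤ N l) {L : ℝ}
    (hL : 0 ≤ L) {μ : 𝓢(RV n, ℂ)} {δ : ℝ} (hδ : 0 < δ) (hμ : ∀ x : RV n, ‖x‖ < δ → μ x = 0) :
    ∃ c : ℝ≥0, ∀ (G : 𝓢(RV n, ℂ)) (X : ℝ≥0∞) (u : ℝ), 0 ≤ u →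
      (∀ γ ≤ N, ∫⁻ ξ : RV n, ENNReal.ofReal ((1 + √(∑ i, ξ i ^ 2)) ^ L) * ‖mixedDeriv γ G ξ‖ₑ ≤ X) →
      ∫⁻ z, ENNReal.ofReal (peetreWeight a r 0 z) *
          ‖(schwartzFT n).symm (G * dilate a (-u) μ) z‖ₑ ≤
        c * (ENNReal.ofReal (2 ^ (-u * (L * a₀))) * X) := by
  obtain ⟨c, hc⟩ := exists_lintegral_peetreWeight_schwartzFT_symm_mul_le a hN
  obtain ⟨S, hS⟩ := exists_norm_mixedDeriv_dilate_neg_le_of_vanish_near_zero ha₀ ha N hL hδ hμ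
  refine ⟨c * (S * (Finset.Iic N).card), fun G X u hu hX => ?_⟩
  have commute : G * dilate a (-u) μ = dilate a (-u) μ * G := by
    ext ξ
    simp only [schwartz_mul_apply, mul_comm]
  rw [commute]
  refine (hc _ G (S * 2 ^ (-u * (L * a₀))) _ (by positivity) (by fun_prop) (hS u hu)).trans ?_
  have sum_le := Finset.sum_le_card_nsmul (Finset.Iic N) _ X fun γ hγ => hX γ (Finset.mem_Iic.1 hγ)
  rw [nsmul_eq_mul] at sum_le
  refine (mul_le_mul_right (mul_le_mul_right sum_le _) _).trans_eq ?_
  rw [ENNReal.ofReal_mul S.coe_nonneg, ENNReal.ofReal_coe_nnreal]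
  push_cast
  ring

/-! ### Exchanging tempered distributions and convolutions -/

/-- Bounded continuous families of jets of order at most `m₀`. The weighted jets of Schwartz
functions live in this Banach space, where Bochner integrals and Hahn–Banach are available. -/
abbrev JetSpace (n m₀ : ℕ) :=
  BoundedContinuousFunction (RV n)
    (∀ m : Fin (m₀ + 1), ContinuousMultilinearMap ℝ (fun _ : Fin m => RV n) ℂ)

instance (n m₀ : ℕ) : NormedAddCommGroup (JetSpace n m₀) :=
  inferInstanceAs (NormedAddCommGroup (BoundedContinuousFunction _ _))

instance (n m₀ : ℕ) : NormedSpace ℂ (JetSpace n m₀) :=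
  inferInstanceAs (NormedSpace ℂ (BoundedContinuousFunction _ _))

theorem exists_one_add_norm_pow_mul_norm_iteratedFDeriv_le (k m₀ : ℕ) (g : 𝓢(RV n, ℂ)) :
    ∃ C : ℝ≥0, ∀ m ≤ m₀, ∀ x, (1 + ‖x‖) ^ k * ‖iteratedFDeriv ℝ m g x‖ ≤ C :=
  ⟨⟨2 ^ k * (Finset.Iic (k, m₀)).sup (fun m => SchwartzMap.seminorm ℝ m.1 m.2) g, by positivity⟩,
    fun _ hm x => SchwartzMap.one_add_le_sup_seminorm_apply (𝕜 := ℝ) (m := (k, m₀)) le_rfl hm g x⟩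

/-- The weighted jet `x ↦ ((1 + |x|)^k D^m g(x))_{m ≤ m₀}` of a Schwartz function. -/
def weightedJet (k m₀ : ℕ) : 𝓢(RV n, ℂ) →ₗ[ℂ] JetSpace n m₀ where
  toFun g := BoundedContinuousFunction.ofNormedAddCommGroup
    (fun x m => (1 + ‖x‖) ^ k • iteratedFDeriv ℝ m g x)
    (continuous_pi fun m => by
      have := g.smooth'.continuous_iteratedFDeriv (m := m) (by exact_mod_cast le_top)
      fun_prop)
    (exists_one_add_norm_pow_mul_norm_iteratedFDeriv_le k m₀ g).choose
    (fun x => (pi_norm_le_iff_of_nonneg (NNReal.coe_nonneg _)).2 fun m => by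
      rw [norm_smul, Real.norm_of_nonneg (by positivity)]
      exact (exists_one_add_norm_pow_mul_norm_iteratedFDeriv_le k m₀ g).choose_spec m
        (by omega) x)
  map_add' g h := by
    ext x m v
    simpa using congr_arg (fun T => (1 + ‖x‖) ^ k • T v) (iteratedFDeriv_add_apply (𝕜 := ℝ)
      (x := x) (g.smooth m).contDiffAt (h.smooth m).contDiffAt)
  map_smul' c g := by
    ext x m v
    simpa [mul_left_comm] using congr_arg (fun T => (1 + ‖x‖) ^ k • T v)
      (iteratedFDeriv_const_smul_apply (𝕜 := ℝ) (x := x) (a := c) (g.smooth m).contDiffAt)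

theorem weightedJet_apply (k m₀ : ℕ) (g : 𝓢(RV n, ℂ)) (x : RV n) (m : Fin (m₀ + 1)) :
    weightedJet k m₀ g x m = (1 + ‖x‖) ^ k • iteratedFDeriv ℝ m g x := rfl

theorem norm_weightedJet_le_iff {k m₀ : ℕ} {g : 𝓢(RV n, ℂ)} {b : ℝ} (hb : 0 ≤ b) :
    ‖weightedJet k m₀ g‖ ≤ b ↔ ∀ m ≤ m₀, ∀ x, (1 + ‖x‖) ^ k * ‖iteratedFDeriv ℝ m g x‖ ≤ b := by
  have norm_apply (x : RV n) (m : Fin (m₀ + 1)) : ‖weightedJet k m₀ g x m‖ =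
      (1 + ‖x‖) ^ k * ‖iteratedFDeriv ℝ m g x‖ := by
    rw [weightedJet_apply, norm_smul, Real.norm_of_nonneg (by positivity)]
  simp only [BoundedContinuousFunction.norm_le hb, pi_norm_le_iff_of_nonneg hb, norm_apply]
  exact ⟨fun h m hm x => h x ⟨m, by omega⟩, fun h x m => h m (by omega) x⟩

theorem le_norm_weightedJet {k m₀ m : ℕ} (hm : m ≤ m₀) (g : 𝓢(RV n, ℂ)) (x : RV n) :
    (1 + ‖x‖) ^ k * ‖iteratedFDeriv ℝ m g x‖ ≤ ‖weightedJet k m₀ g‖ :=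
  (norm_weightedJet_le_iff (norm_nonneg (weightedJet k m₀ g))).1 le_rfl m hm x

theorem weightedJet_injective (k m₀ : ℕ) :
    Function.Injective (weightedJet k m₀ : 𝓢(RV n, ℂ) → JetSpace n m₀) := by
  refine (injective_iff_map_eq_zero _).2 fun g hg => ?_
  ext x
  have := le_norm_weightedJet (k := k) (Nat.zero_le m₀) g x
  rw [hg, norm_zero, norm_iteratedFDeriv_zero] at this
  exact norm_le_zero_iff.1 (nonpos_of_mul_nonpos_right this (by positivity))

theorem exists_norm_le_norm_weightedJet (f : TD n) :
    ∃ k m₀ : ℕ, ∃ C : ℝ≥0, ∀ g, ‖f g‖ ≤ C * ‖weightedJet k m₀ g‖ := by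
  obtain ⟨S, C, -, hC⟩ := Seminorm.bound_of_continuous (schwartz_withSeminorms ℂ (RV n) ℂ)
    (Seminorm.comp (normSeminorm ℂ ℂ) f.toLinearMap) f.continuous.norm
  refine ⟨S.sup Prod.fst, S.sup Prod.snd, C, fun g => (hC g).trans ?_⟩
  rw [_root_.smul_apply, NNReal.smul_def, smul_eq_mul]
  gcongr
  refine Seminorm.finset_sup_apply_le (norm_nonneg _) fun i hi => ?_
  refine SchwartzMap.seminorm_le_bound ℂ _ _ _ (norm_nonneg _) fun x => ?_
  refine le_trans ?_ (le_norm_weightedJet (Finset.le_sup (f := Prod.snd) hi) g x)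
  gcongr
  calc ‖x‖ ^ i.1 ≤ (1 + ‖x‖) ^ i.1 := by gcongr; linarith
    _ ≤ _ := pow_le_pow_right₀ (by linarith [norm_nonneg x]) (Finset.le_sup (f := Prod.fst) hi)

theorem exists_eq_comp_weightedJet (f : TD n) :
    ∃ k m₀ : ℕ, ∃ F : JetSpace n m₀ →L[ℂ] ℂ, ∀ g, f g = F (weightedJet k m₀ g) := by
  obtain ⟨k, m₀, C, hC⟩ := exists_norm_le_norm_weightedJet f
  let e := LinearEquiv.ofInjective (weightedJet k m₀) (weightedJet_injective (n := n) k m₀)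
  let F₀ : LinearMap.range (weightedJet (n := n) k m₀) →L[ℂ] ℂ :=
    (f.toLinearMap.comp e.symm.toLinearMap).mkContinuous C fun y => by
      obtain ⟨g, rfl⟩ := e.surjective y
      exact (congr_arg (‖f ·‖) (e.symm_apply_apply g)).trans_le (hC g)
  obtain ⟨F, hF, -⟩ := exists_extension_norm_eq _ F₀
  refine ⟨k, m₀, F, fun g => ?_⟩
  have on_range : F₀ (e g) = f g := congr_arg f (e.symm_apply_apply g)
  exact on_range.symm.trans (hF (e g)).symm

/-- The translation `g ↦ g(· - z)` of Schwartz functions. -/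
abbrev schwartzTranslate (z : RV n) : 𝓢(RV n, ℂ) →L[ℂ] 𝓢(RV n, ℂ) := SchwartzMap.compSubConstCLM ℂ z

theorem iteratedFDeriv_translate (z : RV n) (g : 𝓢(RV n, ℂ)) (m : ℕ) (x : RV n) :
    iteratedFDeriv ℝ m (schwartzTranslate z g) x = iteratedFDeriv ℝ m g (x - z) :=
  iteratedFDeriv_comp_sub m z x

theorem one_add_norm_pow_le {E : Type*} [SeminormedAddCommGroup E] (k : ℕ) {x y : E} {R : ℝ}
    (h : ‖x - y‖ ≤ R) : (1 + ‖x‖) ^ k ≤ (1 + R) ^ k * (1 + ‖y‖) ^ k := by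
  have hR : 0 ≤ R := (norm_nonneg _).trans h
  have triangle : ‖x‖ ≤ ‖x - y‖ + ‖y‖ := by simpa using norm_add_le (x - y) y
  rw [← mul_pow]
  gcongr
  nlinarith [mul_nonneg hR (norm_nonneg y)]

theorem exists_norm_weightedJet_translate_le (k m₀ : ℕ) (g : 𝓢(RV n, ℂ)) :
    ∃ C : ℝ≥0, ∀ z, ‖weightedJet k m₀ (schwartzTranslate z g)‖ ≤ (1 + ‖z‖) ^ k * C := by
  obtain ⟨C, hC⟩ := exists_one_add_norm_pow_mul_norm_iteratedFDeriv_le k m₀ g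
  refine ⟨C, fun z => (norm_weightedJet_le_iff (by positivity)).2 fun m hm x => ?_⟩
  rw [iteratedFDeriv_translate]
  have weight := one_add_norm_pow_le k (x := x) (y := x - z) (R := ‖z‖) (by simp)
  calc _ ≤ (1 + ‖z‖) ^ k * (1 + ‖x - z‖) ^ k * ‖iteratedFDeriv ℝ m g (x - z)‖ := by gcongr
    _ ≤ _ := by
        rw [mul_assoc]
        gcongr
        exact hC m hm _

theorem exists_one_add_norm_pow_mul_norm_iteratedFDeriv_sub_le (k m₀ : ℕ) (g : 𝓢(RV n, ℂ)) :
    ∃ C : ℝ≥0, ∀ (R : ℝ) (z w : RV n), ‖z‖ ≤ R → ‖w‖ ≤ R → ∀ m ≤ m₀, ∀ x, (1 + ‖x‖) ^ k *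
      ‖iteratedFDeriv ℝ m g (x - z) - iteratedFDeriv ℝ m g (x - w)‖ ≤
        (1 + R) ^ k * C * ‖z - w‖ := by
  obtain ⟨C, hC⟩ := exists_one_add_norm_pow_mul_norm_iteratedFDeriv_le k (m₀ + 1) g
  refine ⟨C, fun R z w hz hw m hm x => ?_⟩
  have hR : 0 ≤ R := (norm_nonneg _).trans hz
  have hx : 0 < (1 + ‖x‖) ^ k := by positivity
  have fderiv_le : ∀ y ∈ Metric.closedBall x R,
      ‖fderiv ℝ (iteratedFDeriv ℝ m g) y‖ ≤ (1 + R) ^ k * C / (1 + ‖x‖) ^ k := fun y hy => by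
    rw [norm_fderiv_iteratedFDeriv, le_div_iff₀ hx]
    have weight := one_add_norm_pow_le k (mem_closedBall_iff_norm'.1 hy)
    calc _ ≤ ‖iteratedFDeriv ℝ (m + 1) g y‖ * ((1 + R) ^ k * (1 + ‖y‖) ^ k) := by gcongr
      _ = (1 + R) ^ k * ((1 + ‖y‖) ^ k * ‖iteratedFDeriv ℝ (m + 1) g y‖) := by ring
      _ ≤ _ := by gcongr; exact hC (m + 1) (by omega) y
  have mean_value := (convex_closedBall x R).norm_image_sub_le_of_norm_fderiv_le (𝕜 := ℝ)
    (fun y _ => (g.smooth (m + 1)).differentiable_iteratedFDeriv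
      (by exact_mod_cast Nat.lt_succ_self m) y) fderiv_le
    (x := x - w) (y := x - z) (by simpa using hw) (by simpa using hz)
  rw [sub_sub_sub_cancel_left, norm_sub_rev w z] at mean_value
  calc _ ≤ (1 + ‖x‖) ^ k * ((1 + R) ^ k * C / (1 + ‖x‖) ^ k * ‖z - w‖) := by gcongr
    _ = _ := by field_simp

theorem continuous_weightedJet_translate (k m₀ : ℕ) (g : 𝓢(RV n, ℂ)) :
    Continuous fun z => weightedJet k m₀ (schwartzTranslate z g) := by
  obtain ⟨C, hC⟩ := exists_one_add_norm_pow_mul_norm_iteratedFDeriv_sub_le k m₀ g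
  refine continuous_iff_continuousAt.2 fun z => tendsto_iff_norm_sub_tendsto_zero.2 ?_
  have majorant : Filter.Tendsto (fun w => (1 + (‖z‖ + 1)) ^ k * C * ‖w - z‖)
      (nhds z) (nhds 0) := by
    have : Continuous fun w => (1 + (‖z‖ + 1)) ^ k * C * ‖w - z‖ := by fun_prop
    simpa using this.tendsto z
  refine squeeze_zero' (.of_forall fun _ => norm_nonneg _) ?_ majorant
  filter_upwards [Metric.ball_mem_nhds z one_pos] with w hw
  have hwz : ‖w‖ ≤ ‖z‖ + 1 := by
    have := norm_add_le (w - z) z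
    rw [sub_add_cancel] at this
    linarith [mem_ball_iff_norm.1 hw]
  rw [← map_sub]
  refine (norm_weightedJet_le_iff (by positivity)).2 fun m hm x => ?_
  have sub_apply := iteratedFDeriv_sub_apply (𝕜 := ℝ) (x := x)
    ((schwartzTranslate w g).smooth m).contDiffAt ((schwartzTranslate z g).smooth m).contDiffAt
  rw [iteratedFDeriv_translate, iteratedFDeriv_translate] at sub_apply
  change _ * ‖iteratedFDeriv ℝ m (⇑(schwartzTranslate w g) - ⇑(schwartzTranslate z g)) x‖ ≤ _
  rw [sub_apply]
  exact hC _ w z hwz (by linarith) m hm x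

theorem integrable_smul_weightedJet_translate (k m₀ : ℕ) (K g : 𝓢(RV n, ℂ)) :
    Integrable fun z => K z • weightedJet k m₀ (schwartzTranslate z g) := by
  obtain ⟨C, hC⟩ := exists_norm_weightedJet_translate_le k m₀ g
  refine ⟨(K.continuous.smul (continuous_weightedJet_translate k m₀ g)).aestronglyMeasurable, ?_⟩
  have bound (z : RV n) : ‖K z • weightedJet k m₀ (schwartzTranslate z g)‖ₑ ≤
      C * (ENNReal.ofReal ((1 + ‖z‖) ^ k) * ‖K z‖ₑ) := by
    rw [enorm_smul, mul_comm, ← mul_assoc]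
    gcongr
    rw [← ofReal_norm, ← ENNReal.ofReal_coe_nnreal, ← ENNReal.ofReal_mul (by positivity),
      mul_comm]
    exact ENNReal.ofReal_le_ofReal (hC z)
  refine (lintegral_mono bound).trans_lt ?_
  rw [lintegral_const_mul' _ _ ENNReal.coe_ne_top]
  exact ENNReal.mul_lt_top ENNReal.coe_lt_top
    (lintegral_one_add_norm_pow_mul_enorm_ne_top k K).lt_top

theorem iteratedLineDerivOp_schwartzConv (K g : 𝓢(RV n, ℂ)) {m : ℕ} (v : Fin m → RV n) :
    ∂^{v} (schwartzConv K g) = schwartzConv K (∂^{v} g) := by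
  induction m generalizing g with
  | zero => simp
  | succ m ih =>
    rw [iteratedLineDerivOp_succ_left, iteratedLineDerivOp_succ_left, ih, lineDerivOp_schwartzConv]

theorem weightedJet_schwartzConv (k m₀ : ℕ) (K g : 𝓢(RV n, ℂ)) :
    weightedJet k m₀ (schwartzConv K g) = ∫ z, K z • weightedJet k m₀ (schwartzTranslate z g) := by
  ext x m v
  let eval : JetSpace n m₀ →L[ℝ] ℂ :=
    (ContinuousMultilinearMap.apply ℝ (fun _ : Fin m => RV n) ℂ v).comp
      ((ContinuousLinearMap.proj (R := ℝ) (φ := fun m : Fin (m₀ + 1) =>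
        ContinuousMultilinearMap ℝ (fun _ : Fin m => RV n) ℂ) m).comp
          (BoundedContinuousFunction.evalCLM ℝ x))
  have eval_translate (z : RV n) : eval (K z • weightedJet k m₀ (schwartzTranslate z g)) =
      (1 + ‖x‖) ^ k • (K z * (∂^{v} g) (x - z)) := by
    change K z • ((1 + ‖x‖) ^ k • iteratedFDeriv ℝ m (schwartzTranslate z g) x v) = _
    rw [iteratedFDeriv_translate, SchwartzMap.iteratedLineDerivOp_eq_iteratedFDeriv, smul_comm,
      smul_eq_mul]
  change _ = eval (∫ z, K z • weightedJet k m₀ (schwartzTranslate z g))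
  rw [← eval.integral_comp_comm (integrable_smul_weightedJet_translate k m₀ K g)]
  simp_rw [eval_translate]
  rw [integral_smul, ← schwartzConv_apply, ← iteratedLineDerivOp_schwartzConv,
    SchwartzMap.iteratedLineDerivOp_eq_iteratedFDeriv]
  rfl

theorem tempered_schwartzConv (f : TD n) (K g : 𝓢(RV n, ℂ)) :
    f (schwartzConv K g) = ∫ z, K z * f (schwartzTranslate z g) := by
  obtain ⟨k, m₀, F, hF⟩ := exists_eq_comp_weightedJet f
  rw [hF, weightedJet_schwartzConv,
    ← F.integral_comp_comm (integrable_smul_weightedJet_translate k m₀ K g)]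
  simp only [hF, map_smul, smul_eq_mul]

/-- The reflected translation `g ↦ g(y - ·)`, so that `(f * g)(y) = f (reflect y g)`. -/
def reflect (y : RV n) : 𝓢(RV n, ℂ) →L[ℂ] 𝓢(RV n, ℂ) :=
  (schwartzTranslate y).comp
    (SchwartzMap.compCLMOfContinuousLinearEquiv ℂ (ContinuousLinearEquiv.neg ℝ))

theorem reflect_apply (y : RV n) (g : 𝓢(RV n, ℂ)) (x : RV n) : reflect y g x = g (y - x) :=
  congr_arg g (neg_sub x y)

theorem reflect_translate (y z : RV n) (g : 𝓢(RV n, ℂ)) :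
    reflect y (schwartzTranslate z g) = reflect (y - z) g := by
  ext x
  rw [reflect_apply, reflect_apply, SchwartzMap.compSubConstCLM_apply, sub_right_comm]

theorem enorm_tempered_reflect_schwartzConv_le (f : TD n) (K g : 𝓢(RV n, ℂ)) (y : RV n) :
    ‖f (reflect y (schwartzConv K g))‖ₑ ≤ ∫⁻ z, ‖K z‖ₑ * ‖f (reflect (y - z) g)‖ₑ := by
  have exchange := tempered_schwartzConv (f.comp (reflect y)) K g
  simp only [ContinuousLinearMap.comp_apply, reflect_translate] at exchange
  rw [exchange]
  refine (enorm_integral_le_lintegral_enorm _).trans_eq (lintegral_congr fun z => ?_)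
  rw [enorm_mul]

theorem norm_iteratedFDeriv_dilate_neg_le {a : Fin n → ℝ} (ha : ∀ i, 0 ≤ a i) {u : ℝ}
    (hu : 0 ≤ u) (g : 𝓢(RV n, ℂ)) (m : ℕ) (x : RV n) :
    ‖iteratedFDeriv ℝ m (dilate a (-u) g) x‖ ≤
      ‖iteratedFDeriv ℝ m g (anisoScale a (-u) x)‖ := by
  have contraction : ‖(anisoScale a (-u) : RV n →L[ℝ] RV n)‖ ≤ 1 :=
    ContinuousLinearMap.opNorm_le_bound _ zero_le_one fun v => by
      simpa using norm_anisoScale_neg_le ha hu v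
  change ‖iteratedFDeriv ℝ m (g ∘ (anisoScale a (-u) : RV n →L[ℝ] RV n)) x‖ ≤ _
  rw [ContinuousLinearMap.iteratedFDeriv_comp_right _ (g.smooth m) x le_rfl]
  exact (ContinuousMultilinearMap.norm_compContinuousLinearMap_le _ _).trans
    (mul_le_of_le_one_right (norm_nonneg _)
      (Finset.prod_le_one (fun _ _ => norm_nonneg _) fun _ _ => contraction))

theorem exists_one_add_norm_pow_mul_norm_iteratedFDeriv_mul_dilate_neg_le {a : Fin n → ℝ}
    (ha : ∀ i, 0 ≤ a i) (k m : ℕ) (g h : 𝓢(RV n, ℂ)) :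
    ∃ C : ℝ≥0, ∀ u, 0 ≤ u → ∀ x,
      (1 + ‖x‖) ^ k * ‖iteratedFDeriv ℝ m (g * dilate a (-u) h) x‖ ≤ C := by
  obtain ⟨Cg, hCg⟩ := exists_one_add_norm_pow_mul_norm_iteratedFDeriv_le k m g
  obtain ⟨Ch, hCh⟩ := exists_one_add_norm_pow_mul_norm_iteratedFDeriv_le 0 m h
  refine ⟨∑ i ∈ Finset.range (m + 1), m.choose i * Cg * Ch, fun u hu x => ?_⟩
  have leibniz := norm_iteratedFDeriv_mul_le (g.smooth m) ((dilate a (-u) h).smooth m) x le_rfl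
  push_cast
  calc _ ≤ (1 + ‖x‖) ^ k * ∑ i ∈ Finset.range (m + 1), m.choose i * ‖iteratedFDeriv ℝ i g x‖ *
        ‖iteratedFDeriv ℝ (m - i) (dilate a (-u) h) x‖ := by gcongr; exact leibniz
    _ = ∑ i ∈ Finset.range (m + 1), m.choose i * ((1 + ‖x‖) ^ k * ‖iteratedFDeriv ℝ i g x‖) *
        ‖iteratedFDeriv ℝ (m - i) (dilate a (-u) h) x‖ := by
      rw [Finset.mul_sum]
      exact Finset.sum_congr rfl fun _ _ => by ring
    _ ≤ _ := by
      gcongr with i hi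
      · exact hCg i (Finset.mem_range_succ_iff.1 hi) x
      · refine (norm_iteratedFDeriv_dilate_neg_le ha hu h _ x).trans ?_
        simpa using hCh (m - i) (Nat.sub_le m i) (anisoScale a (-u) x)

theorem seminorm_le_div_of_vanish_on_ball {k m : ℕ} {g : 𝓢(RV n, ℂ)} {C R : ℝ} (hC : 0 ≤ C)
    (hR : 0 < R) (hg : ∀ x, ‖x‖ < R → g x = 0)
    (bound : ∀ x, (1 + ‖x‖) ^ (k + 1) * ‖iteratedFDeriv ℝ m g x‖ ≤ C) :
    SchwartzMap.seminorm ℂ k m g ≤ C / R := by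
  refine SchwartzMap.seminorm_le_bound ℂ k m g (by positivity) fun x => ?_
  rcases lt_or_ge ‖x‖ R with hx | hx
  · have locally_zero : g =ᶠ[nhds x] 0 := by
      filter_upwards [Metric.isOpen_ball.mem_nhds (mem_ball_zero_iff.2 hx)] with y hy
      exact hg y (mem_ball_zero_iff.1 hy)
    rw [(locally_zero.iteratedFDeriv ℝ m).eq_of_nhds, iteratedFDeriv_zero, Pi.zero_apply,
      norm_zero, mul_zero]
    positivity
  · rw [le_div_iff₀ hR]
    calc _ = ‖x‖ ^ k * R * ‖iteratedFDeriv ℝ m g x‖ := by ring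
      _ ≤ (1 + ‖x‖) ^ k * (1 + ‖x‖) * ‖iteratedFDeriv ℝ m g x‖ := by
          gcongr <;> linarith
      _ ≤ C := bound x

theorem tendsto_mul_dilate_neg {a : Fin n → ℝ} {a₀ : ℝ} (ha₀ : 0 < a₀) (ha : ∀ i, a₀ ≤ a i)
    {χ : 𝓢(RV n, ℂ)} {δ : ℝ} (hδ : 0 < δ) (hχ : ∀ x, ‖x‖ < δ → χ x = 1) (g : 𝓢(RV n, ℂ)) :
    Filter.Tendsto (fun u : ℝ => g * dilate a (-u) χ) Filter.atTop (nhds g) := by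
  refine ((schwartz_withSeminorms ℂ (RV n) ℂ).tendsto_nhds _ g).2 fun ⟨k, m⟩ ε hε => ?_
  obtain ⟨C₁, hC₁⟩ := exists_one_add_norm_pow_mul_norm_iteratedFDeriv_mul_dilate_neg_le
    (fun i => ha₀.le.trans (ha i)) (k + 1) m g χ
  obtain ⟨C₂, hC₂⟩ := exists_one_add_norm_pow_mul_norm_iteratedFDeriv_le (k + 1) m g
  have radius_tendsto : Filter.Tendsto (fun u : ℝ => δ * (2 : ℝ) ^ (u * a₀)) .atTop .atTop :=
    ((tendsto_rpow_atTop_of_base_gt_one _ one_lt_two).comp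
      (Filter.tendsto_id.atTop_mul_const ha₀)).const_mul_atTop hδ
  filter_upwards [Filter.eventually_ge_atTop 0,
    (radius_tendsto.const_div_atTop (C₁ + C₂ : ℝ)).eventually (gt_mem_nhds hε)] with u hu small
  refine lt_of_le_of_lt (seminorm_le_div_of_vanish_on_ball (by positivity) (by positivity)
    (fun x hx => ?_) fun x => ?_) small
  · have hx' : ‖anisoScale a (-u) x‖ < δ := by
      refine (norm_anisoScale_neg_le ha hu x).trans_lt ?_
      rwa [neg_mul, Real.rpow_neg two_pos.le, inv_mul_lt_iff₀ (by positivity), mul_comm]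
    rw [_root_.sub_apply, schwartz_mul_apply, dilate_apply, hχ _ hx', mul_one, sub_self]
  · have sub_apply := iteratedFDeriv_sub_apply (𝕜 := ℝ) (x := x)
      ((g * dilate a (-u) χ).smooth m).contDiffAt (g.smooth m).contDiffAt
    change _ * ‖iteratedFDeriv ℝ m (⇑(g * dilate a (-u) χ) - ⇑g) x‖ ≤ _
    rw [sub_apply]
    calc _ ≤ (1 + ‖x‖) ^ (k + 1) * (‖iteratedFDeriv ℝ m (g * dilate a (-u) χ) x‖ +
          ‖iteratedFDeriv ℝ m g x‖) := by gcongr; exact norm_sub_le _ _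
      _ ≤ C₁ + C₂ := by rw [mul_add]; exact add_le_add (hC₁ u hu x) (hC₂ m le_rfl x)

theorem exists_mul_eq_of_hasCompactSupport {u Φ : 𝓢(RV n, ℂ)} (hu : HasCompactSupport u)
    (h : ∀ x, Φ x = 0 → u =ᶠ[nhds x] 0) :
    ∃ μ : 𝓢(RV n, ℂ), (∀ x, u x = 0 → μ x = 0) ∧ μ * Φ = u := by
  have compact : HasCompactSupport fun x => u x / Φ x :=
    hu.mono fun x hx hux => hx (by simp [hux])
  have smooth : ContDiff ℝ (⊤ : ℕ∞) fun x => u x / Φ x := contDiff_iff_contDiffAt.2 fun x => by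
    by_cases hx : Φ x = 0
    · refine contDiffAt_const (c := (0 : ℂ)) |>.congr_of_eventuallyEq ?_
      filter_upwards [h x hx] with y hy
      rw [hy, Pi.zero_apply, zero_div]
    · simp only [div_eq_mul_inv]
      exact u.smooth'.contDiffAt.mul (Φ.smooth'.contDiffAt.inv hx)
  have apply_eq (x : RV n) : compact.toSchwartzMap smooth x = u x / Φ x := rfl
  refine ⟨compact.toSchwartzMap smooth, fun x hx => by rw [apply_eq, hx, zero_div], ?_⟩
  ext x
  rw [schwartz_mul_apply, apply_eq]
  exact div_mul_cancel_of_imp fun hx => (h x hx).eq_of_nhds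

/-! ### Calderón multipliers -/

theorem exists_schwartzMap_eqOn_one {K U : Set (RV n)} (hK : IsCompact K) (hU : IsOpen U)
    (hKU : K ⊆ U) :
    ∃ χ : 𝓢(RV n, ℂ), Set.EqOn χ 1 K ∧ Set.EqOn χ 0 Uᶜ := by
  obtain ⟨L, hL, hKL, hLU⟩ := exists_compact_between hK hU hKU
  obtain ⟨f, f_one, f_zero, -⟩ := exists_contMDiffMap_one_nhds_of_subset_interior (n := (⊤ : ℕ∞))
    (modelWithCornersSelf ℝ (RV n)) hK.isClosed hKL
  have compact : HasCompactSupport fun x => (f x : ℂ) :=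
    .intro hL fun x hx => by rw [f_zero x hx, ofReal_zero]
  have smooth : ContDiff ℝ (⊤ : ℕ∞) fun x => (f x : ℂ) :=
    ofRealCLM.contDiff.comp f.contMDiff.contDiff
  refine ⟨compact.toSchwartzMap smooth, fun x hx => ?_, fun x hx => ?_⟩
  · exact congr_arg ofReal (f_one.self_of_nhdsSet x hx)
  · exact congr_arg ofReal (f_zero x fun hxL => hx (hLU hxL))

/-- The quadratic form `Q_ρ(ξ) = ∑ ξ_i² / ρ^(2 a_i)`; the anisotropic distance of `ξ ≠ 0` is the
solution `ρ` of `Q_ρ(ξ) = 1`. -/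
def anisoQuad (a : Fin n → ℝ) (ρ : ℝ) (ξ : RV n) : ℝ := ∑ i, ξ i ^ 2 / ρ ^ (2 * a i)

theorem continuous_anisoQuad (a : Fin n → ℝ) (ρ : ℝ) : Continuous (anisoQuad a ρ) := by
  unfold anisoQuad
  fun_prop

theorem anisoQuad_anisoScale (a : Fin n → ℝ) (u : ℝ) {ρ : ℝ} (hρ : 0 < ρ) (ξ : RV n) :
    anisoQuad a (2 ^ u * ρ) (anisoScale a u ξ) = anisoQuad a ρ ξ := by
  refine Finset.sum_congr rfl fun i _ => ?_
  have weight : ((2 : ℝ) ^ (u * a i)) ^ 2 = (2 ^ u) ^ (2 * a i) := by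
    rw [← Real.rpow_natCast, ← Real.rpow_mul two_pos.le, ← Real.rpow_mul two_pos.le]
    congr 1
    push_cast
    ring
  rw [anisoScale_apply, mul_pow, weight, Real.mul_rpow (by positivity) hρ.le,
    mul_div_mul_left _ _ (by positivity)]

theorem strictAntiOn_anisoQuad {a : Fin n → ℝ} (ha : ∀ i, 0 < a i) {ξ : RV n} (hξ : ξ ≠ 0) :
    StrictAntiOn (fun ρ => anisoQuad a ρ ξ) (Set.Ioi 0) := by
  intro ρ hρ σ hσ hρσ
  rw [Set.mem_Ioi] at hρ hσ
  obtain ⟨i, hi⟩ := Function.ne_iff.1 hξ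
  have pow_lt (j : Fin n) : ρ ^ (2 * a j) < σ ^ (2 * a j) :=
    Real.rpow_lt_rpow hρ.le hρσ (by linarith [ha j])
  refine Finset.sum_lt_sum (fun j _ => ?_) ⟨i, Finset.mem_univ i, ?_⟩
  · exact div_le_div_of_nonneg_left (sq_nonneg _) (by positivity) (pow_lt j).le
  · exact div_lt_div_of_pos_left (sq_pos_of_ne_zero hi) (by positivity) (pow_lt i)

namespace IsAnorm

variable {a : Fin n → ℝ} {anorm : RV n → ℝ}

theorem lt_iff (h : IsAnorm n a anorm) (ha : ∀ i, 0 < a i) {ρ : ℝ} (hρ : 0 < ρ) (ξ : RV n) :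
    anorm ξ < ρ ↔ anisoQuad a ρ ξ < 1 := by
  by_cases hξ : ξ = 0
  · simp [hξ, h.1, anisoQuad, hρ]
  · obtain ⟨pos, eq_one⟩ := h.2 ξ hξ
    rw [← (strictAntiOn_anisoQuad ha hξ).lt_iff_gt hρ pos]
    exact iff_of_eq (congr_arg (anisoQuad a ρ ξ < ·) eq_one)

theorem le_iff (h : IsAnorm n a anorm) (ha : ∀ i, 0 < a i) {ρ : ℝ} (hρ : 0 < ρ) (ξ : RV n) :
    anorm ξ ≤ ρ ↔ anisoQuad a ρ ξ ≤ 1 := by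
  by_cases hξ : ξ = 0
  · simp [hξ, h.1, anisoQuad, hρ.le]
  · obtain ⟨pos, eq_one⟩ := h.2 ξ hξ
    rw [← (strictAntiOn_anisoQuad ha hξ).le_iff_ge hρ pos]
    exact iff_of_eq (congr_arg (anisoQuad a ρ ξ ≤ ·) eq_one)

theorem nonneg (h : IsAnorm n a anorm) (ξ : RV n) : 0 ≤ anorm ξ := by
  by_cases hξ : ξ = 0
  exacts [(hξ ▸ h.1).ge, (h.2 ξ hξ).1.le]

theorem isOpen_lt (h : IsAnorm n a anorm) (ha : ∀ i, 0 < a i) {ρ : ℝ} (hρ : 0 < ρ) :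
    IsOpen {ξ | anorm ξ < ρ} := by
  simp only [h.lt_iff ha hρ]
  exact _root_.isOpen_lt (continuous_anisoQuad a ρ) continuous_const

theorem isCompact_le (h : IsAnorm n a anorm) (ha : ∀ i, 0 < a i) {ρ : ℝ} (hρ : 0 < ρ) :
    IsCompact {ξ | anorm ξ ≤ ρ} := by
  simp only [h.le_iff ha hρ]
  refine (isCompact_univ_pi fun i =>
    isCompact_Icc (a := -ρ ^ a i) (b := ρ ^ a i)).of_isClosed_subset
    (isClosed_le (continuous_anisoQuad a ρ) continuous_const) fun ξ hξ i _ => abs_le.1 ?_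
  have term_le : ξ i ^ 2 / ρ ^ (2 * a i) ≤ 1 :=
    (Finset.single_le_sum (f := fun i => ξ i ^ 2 / ρ ^ (2 * a i)) (fun _ _ => by positivity)
      (Finset.mem_univ i)).trans hξ
  rw [div_le_one (by positivity), mul_comm, Real.rpow_mul hρ.le, Real.rpow_two] at term_le
  exact abs_le_of_sq_le_sq term_le (by positivity)

theorem anorm_anisoScale (h : IsAnorm n a anorm) (ha : ∀ i, 0 < a i) (u : ℝ) (ξ : RV n) :
    anorm (anisoScale a u ξ) = 2 ^ u * anorm ξ := by
  by_cases hξ : ξ = 0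
  · simp [hξ, h.1]
  · have scale_ne_zero : anisoScale a u ξ ≠ 0 := by simpa using hξ
    obtain ⟨pos, eq_one⟩ := h.2 ξ hξ
    obtain ⟨scale_pos, scale_eq_one⟩ := h.2 _ scale_ne_zero
    refine (strictAntiOn_anisoQuad ha scale_ne_zero).injOn scale_pos
      (Set.mem_Ioi.2 (by positivity)) ?_
    exact scale_eq_one.trans ((anisoQuad_anisoScale a u pos ξ).trans eq_one).symm

theorem eventually_lt (h : IsAnorm n a anorm) (ha : ∀ i, 0 < a i) {ρ : ℝ} {ξ : RV n}
    (hξ : anorm ξ < ρ) : ∀ᶠ y in nhds ξ, anorm y < ρ :=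
  (h.isOpen_lt ha ((h.nonneg ξ).trans_lt hξ)).mem_nhds hξ

theorem eventually_gt (h : IsAnorm n a anorm) (ha : ∀ i, 0 < a i) {ρ : ℝ} (hρ : 0 < ρ) {ξ : RV n}
    (hξ : ρ < anorm ξ) : ∀ᶠ y in nhds ξ, ρ < anorm y := by
  filter_upwards [(h.isCompact_le ha hρ).isClosed.isOpen_compl.mem_nhds (not_le.2 hξ)] with y hy
  exact not_le.1 hy

theorem exists_cutoff (h : IsAnorm n a anorm) (ha : ∀ i, 0 < a i) {ρ σ : ℝ} (hρ : 0 < ρ)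
    (hρσ : ρ < σ) :
    ∃ χ : 𝓢(RV n, ℂ), (∀ ξ, anorm ξ ≤ ρ → χ ξ = 1) ∧ ∀ ξ, σ ≤ anorm ξ → χ ξ = 0 := by
  obtain ⟨χ, χ_one, χ_zero⟩ := exists_schwartzMap_eqOn_one (h.isCompact_le ha hρ)
    (h.isOpen_lt ha (hρ.trans hρσ)) fun ξ (hξ : anorm ξ ≤ ρ) => hξ.trans_lt hρσ
  exact ⟨χ, χ_one, fun ξ hξ => χ_zero (not_lt.2 hξ)⟩

theorem hasCompactSupport (h : IsAnorm n a anorm) (ha : ∀ i, 0 < a i) {ρ : ℝ} (hρ : 0 < ρ)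
    {g : RV n → ℂ} (hg : ∀ ξ, ρ ≤ anorm ξ → g ξ = 0) : HasCompactSupport g :=
  .intro (h.isCompact_le ha hρ) fun ξ hξ => hg ξ (not_le.1 hξ).le

theorem sub_dilate_apply_eq_zero (h : IsAnorm n a anorm) (ha : ∀ i, 0 < a i) {ρ σ : ℝ}
    {χ : 𝓢(RV n, ℂ)} (χ_one : ∀ ξ, anorm ξ ≤ ρ → χ ξ = 1) (χ_zero : ∀ ξ, σ ≤ anorm ξ → χ ξ = 0)
    {ξ : RV n} (hξ : anorm ξ < ρ / 2 ∨ σ ≤ anorm ξ) : (χ - dilate a 1 χ) ξ = 0 := by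
  have scale : anorm (anisoScale a 1 ξ) = 2 * anorm ξ := by
    rw [h.anorm_anisoScale ha, Real.rpow_one]
  have nonneg := h.nonneg ξ
  rw [_root_.sub_apply, dilate_apply]
  rcases hξ with inner | outer
  · rw [χ_one ξ (by linarith), χ_one _ (by linarith), sub_self]
  · rw [χ_zero ξ outer, χ_zero _ (by linarith), sub_self]

end IsAnorm

theorem exists_calderon_multipliers {a : Fin n → ℝ} (ha : ∀ i, 0 < a i) {anorm : RV n → ℝ}
    (h : IsAnorm n a anorm) {φ₀ φ : 𝓢(RV n, ℂ)} {ε : ℝ} (hε : 0 < ε) (hT : Tauber n anorm φ₀ φ ε) :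
    ∃ χ μ₀ μ : 𝓢(RV n, ℂ), (∀ᶠ x in nhds 0, χ x = 1 ∧ μ x = 0) ∧
      μ₀ * schwartzFT n φ₀ = χ ∧ μ * schwartzFT n φ = χ - dilate a 1 χ := by
  have hσ : 0 < 3 / 2 * ε := by positivity
  obtain ⟨χ, χ_one, χ_zero⟩ := h.exists_cutoff ha (ρ := 5 / 4 * ε) (σ := 3 / 2 * ε)
    (by positivity) (by linarith)
  have diff_zero {ξ : RV n} (hξ : anorm ξ < 5 / 4 * ε / 2 ∨ 3 / 2 * ε ≤ anorm ξ) :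
      (χ - dilate a 1 χ) ξ = 0 := h.sub_dilate_apply_eq_zero ha χ_one χ_zero hξ
  obtain ⟨μ₀, -, hμ₀⟩ := exists_mul_eq_of_hasCompactSupport (Φ := schwartzFT n φ₀)
    (h.hasCompactSupport ha hσ χ_zero) fun ξ hξ => by
      rw [coe_schwartzFT, ← norm_eq_zero] at hξ
      have outside : 3 / 2 * ε < anorm ξ := by
        by_contra! hle
        exact (hT.1 ξ (by linarith)).ne' hξ
      exact (h.eventually_gt ha hσ outside).mono fun y hy => χ_zero y hy.le
  obtain ⟨μ, μ_zero, hμ⟩ := exists_mul_eq_of_hasCompactSupport (Φ := schwartzFT n φ)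
    (h.hasCompactSupport ha hσ fun ξ hξ => diff_zero (.inr hξ)) fun ξ hξ => by
      rw [coe_schwartzFT, ← norm_eq_zero] at hξ
      have off_annulus : anorm ξ < 5 / 4 * ε / 2 ∨ 3 / 2 * ε < anorm ξ := by
        by_contra! hle
        exact (hT.2 ξ (by linarith) (by linarith)).ne' hξ
      rcases off_annulus with inner | outer
      · exact (h.eventually_lt ha inner).mono fun y hy => diff_zero (.inl hy)
      · exact (h.eventually_gt ha hσ outer).mono fun y hy => diff_zero (.inr hy.le)
  refine ⟨χ, μ₀, μ, ?_, hμ₀, hμ⟩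
  filter_upwards [h.eventually_lt ha (h.1.trans_lt (show 0 < 5 / 4 * ε / 2 by positivity))]
    with ξ hξ
  exact ⟨χ_one ξ (by linarith), μ_zero ξ (diff_zero (.inl hξ))⟩

/-! ### Coupling of dyadic scales in `L_{p̄}(ℓ_q)` -/

theorem mixAux_le_const_mul {p : Fin n → ℝ≥0∞} (hp : ∀ i, p i ≠ 0) {c : ℝ≥0∞} (hc : c ≠ ∞)
    {F G : RV n → ℝ≥0∞} (h : ∀ x, F x ≤ c * G x) (l : ℕ) (x : RV n) :
    mixAux n p l F x ≤ c * mixAux n p l G x := by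
  induction l generalizing x with
  | zero => exact h x
  | succ l ih =>
    simp only [mixAux]
    split_ifs with hl hp_top
    · exact (essSup_mono_ae (.of_forall fun t => ih _)).trans_eq ENNReal.essSup_const_mul
    · have hP : 0 < (p ⟨l, hl⟩).toReal := ENNReal.toReal_pos (hp _) hp_top
      set P := (p ⟨l, hl⟩).toReal
      calc _ ≤ (∫⁻ t : ℝ, c ^ P * mixAux n p l G (Function.update x ⟨l, hl⟩ t) ^ P) ^ (1 / P) := by
            gcongr with t
            rw [← ENNReal.mul_rpow_of_nonneg _ _ hP.le]
            gcongr
            exact ih _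
        _ = _ := by
            rw [lintegral_const_mul' _ _ (ENNReal.rpow_ne_top_of_nonneg hP.le hc),
              ENNReal.mul_rpow_of_nonneg _ _ (by positivity), one_div, ENNReal.rpow_rpow_inv hP.ne']
    · exact ih x

theorem mixedNorm_le_const_mul {p : Fin n → ℝ≥0∞} (hp : ∀ i, p i ≠ 0) {c : ℝ≥0∞} (hc : c ≠ ∞)
    {F G : RV n → ℝ≥0∞} (h : ∀ x, F x ≤ c * G x) : mixedNorm n p F ≤ c * mixedNorm n p G :=
  mixAux_le_const_mul hp hc h n _

/-- The `ℓ_q` quasi-norm of a sequence, so that `seqNorm` is the mixed norm of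
`x ↦ ellNorm q (u · x)`. -/
def ellNorm (q : ℝ≥0∞) (u : ℕ → ℝ≥0∞) : ℝ≥0∞ :=
  if q = ∞ then ⨆ k, u k else (∑' k, u k ^ q.toReal) ^ (1 / q.toReal)

theorem ellNorm_mono (q : ℝ≥0∞) {u v : ℕ → ℝ≥0∞} (h : ∀ k, u k ≤ v k) :
    ellNorm q u ≤ ellNorm q v := by
  unfold ellNorm
  split_ifs <;> gcongr with k <;> exact h k

theorem ellNorm_const_mul {q : ℝ≥0∞} (hq : q ≠ 0) (c : ℝ≥0∞) (u : ℕ → ℝ≥0∞) :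
    ellNorm q (fun k => c * u k) = c * ellNorm q u := by
  unfold ellNorm
  split_ifs with hq_top
  · exact (ENNReal.mul_iSup ..).symm
  · have hP : 0 < q.toReal := ENNReal.toReal_pos hq hq_top
    simp_rw [ENNReal.mul_rpow_of_nonneg _ _ hP.le]
    rw [ENNReal.tsum_mul_left, ENNReal.mul_rpow_of_nonneg _ _ (by positivity), one_div,
      ENNReal.rpow_rpow_inv hP.ne']

/-- The kernel `2^(-δ|j-k|)` measuring the decoupling of the dyadic scales `j` and `k`. -/
def scaleDecay (δ : ℝ) (j k : ℕ) : ℝ≥0∞ := ENNReal.ofReal (2 ^ (-(δ * |(j : ℝ) - k|)))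

theorem scaleDecay_comm (δ : ℝ) (j k : ℕ) : scaleDecay δ j k = scaleDecay δ k j := by
  rw [scaleDecay, scaleDecay, abs_sub_comm]

theorem scaleDecay_half_mul_self (δ : ℝ) (j k : ℕ) :
    scaleDecay (δ / 2) j k * scaleDecay (δ / 2) j k = scaleDecay δ j k := by
  unfold scaleDecay
  rw [← ENNReal.ofReal_mul (by positivity), ← Real.rpow_add two_pos]
  ring_nf

theorem scaleDecay_rpow (δ : ℝ) {P : ℝ} (hP : 0 ≤ P) (j k : ℕ) :
    scaleDecay δ j k ^ P = scaleDecay (δ * P) j k := by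
  unfold scaleDecay
  rw [ENNReal.ofReal_rpow_of_nonneg (by positivity) hP, ← Real.rpow_mul two_pos.le]
  ring_nf

theorem exists_tsum_scaleDecay_le {δ : ℝ} (hδ : 0 < δ) :
    ∃ W : ℝ≥0, ∀ j, ∑' k, scaleDecay δ j k ≤ W := by
  let g (m : ℤ) : ℝ := 2 ^ (-(δ * |(m : ℝ)|))
  have geometric : Summable fun m : ℕ => (2 : ℝ) ^ (-(δ * m)) := by
    refine (summable_geometric_of_lt_one (r := (2 : ℝ) ^ (-δ)) (by positivity)
      (Real.rpow_lt_one_of_one_lt_of_neg one_lt_two (neg_lt_zero.2 hδ))).congr fun m => ?_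
    rw [← Real.rpow_natCast, ← Real.rpow_mul two_pos.le, neg_mul]
  have summable : Summable g :=
    .of_nat_of_neg (geometric.congr fun m => by simp [g]) (geometric.congr fun m => by simp [g])
  refine ⟨(∑' m, ENNReal.ofReal (g m)).toNNReal, fun j => ?_⟩
  rw [ENNReal.coe_toNNReal summable.tsum_ofReal_ne_top]
  refine le_of_eq_of_le (tsum_congr fun k => ?_) (ENNReal.tsum_comp_le_tsum_of_injective
    (f := fun k : ℕ => (j : ℤ) - k) (fun k l hkl => by simpa using hkl) _)
  simp [scaleDecay, g]

theorem tsum_mul_rpow_le {ι : Type*} {P : ℝ} (hP : 0 < P) (v u : ι → ℝ≥0∞) :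
    (∑' k, v k * u k) ^ P ≤ (∑' k, v k) ^ P * ∑' k, u k ^ P := by
  have le_sum (k : ι) : u k ≤ (∑' k, u k ^ P) ^ P⁻¹ :=
    (ENNReal.le_rpow_inv_iff hP).2 (ENNReal.le_tsum k)
  calc _ ≤ (∑' k, v k * (∑' k, u k ^ P) ^ P⁻¹) ^ P := by
        gcongr with k
        exact le_sum k
    _ = _ := by
        rw [ENNReal.tsum_mul_right, ENNReal.mul_rpow_of_nonneg _ _ hP.le,
          ENNReal.rpow_inv_rpow hP.ne']

theorem exists_tsum_rpow_tsum_scaleDecay_le {δ P : ℝ} (hδ : 0 < δ) (hP : 0 < P) :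
    ∃ c : ℝ≥0, ∀ u : ℕ → ℝ≥0∞,
      ∑' j, (∑' k, scaleDecay δ j k * u k) ^ P ≤ c ^ P * ∑' k, u k ^ P := by
  obtain ⟨W, hW⟩ := exists_tsum_scaleDecay_le (half_pos hδ)
  obtain ⟨V, hV⟩ := exists_tsum_scaleDecay_le (mul_pos (half_pos hδ) hP)
  have pointwise (u : ℕ → ℝ≥0∞) (j : ℕ) : (∑' k, scaleDecay δ j k * u k) ^ P ≤
      W ^ P * ∑' k, scaleDecay (δ / 2 * P) k j * u k ^ P := by
    simp_rw [← scaleDecay_half_mul_self δ, mul_assoc, scaleDecay_comm _ _ j,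
      ← scaleDecay_rpow _ hP.le, ← ENNReal.mul_rpow_of_nonneg _ _ hP.le]
    refine (tsum_mul_rpow_le hP _ _).trans ?_
    gcongr
    simpa only [scaleDecay_comm _ j] using hW j
  refine ⟨W * V ^ P⁻¹, fun u => ?_⟩
  calc _ ≤ ∑' j, W ^ P * ∑' k, scaleDecay (δ / 2 * P) k j * u k ^ P :=
        ENNReal.tsum_le_tsum (pointwise u)
    _ = W ^ P * ∑' k, (∑' j, scaleDecay (δ / 2 * P) k j) * u k ^ P := by
        rw [ENNReal.tsum_mul_left, ENNReal.tsum_comm]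
        simp_rw [ENNReal.tsum_mul_right]
    _ ≤ W ^ P * ∑' k, V * u k ^ P := by
        gcongr with k
        exact hV k
    _ = _ := by
        rw [ENNReal.tsum_mul_left, ← mul_assoc, ENNReal.coe_mul,
          ENNReal.mul_rpow_of_nonneg _ _ hP.le, ENNReal.coe_rpow_of_nonneg _ (by positivity),
          ENNReal.rpow_inv_rpow hP.ne']

theorem exists_ellNorm_tsum_scaleDecay_le {q : ℝ≥0∞} (hq : q ≠ 0) {δ : ℝ} (hδ : 0 < δ) :
    ∃ c : ℝ≥0, ∀ u : ℕ → ℝ≥0∞,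
      ellNorm q (fun j => ∑' k, scaleDecay δ j k * u k) ≤ c * ellNorm q u := by
  by_cases hq_top : q = ∞
  · obtain ⟨W, hW⟩ := exists_tsum_scaleDecay_le hδ
    refine ⟨W, fun u => ?_⟩
    simp only [ellNorm, if_pos hq_top]
    refine iSup_le fun j => ?_
    calc _ ≤ ∑' k, scaleDecay δ j k * ⨆ k, u k := by
          gcongr with k
          exact le_iSup u k
      _ ≤ _ := by
          rw [ENNReal.tsum_mul_right]
          gcongr
          exact hW j
  · have hP : 0 < q.toReal := ENNReal.toReal_pos hq hq_top
    obtain ⟨c, hc⟩ := exists_tsum_rpow_tsum_scaleDecay_le hδ hP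
    refine ⟨c, fun u => ?_⟩
    simp only [ellNorm, if_neg hq_top, one_div]
    rw [ENNReal.rpow_inv_le_iff hP, ENNReal.mul_rpow_of_nonneg _ _ hP.le,
      ENNReal.rpow_inv_rpow hP.ne']
    exact hc u

theorem exists_seqNorm_le_of_le_tsum_scaleDecay {p : Fin n → ℝ≥0∞} (hp : ∀ i, p i ≠ 0) {q : ℝ≥0∞}
    (hq : q ≠ 0) {δ : ℝ} (hδ : 0 < δ) :
    ∃ c : ℝ≥0, ∀ X : ℝ≥0, ∀ u v : ℕ → RV n → ℝ≥0∞,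
      (∀ j x, u j x ≤ X * ∑' k, scaleDecay δ j k * v k x) →
        seqNorm n p q u ≤ c * X * seqNorm n p q v := by
  obtain ⟨c, hc⟩ := exists_ellNorm_tsum_scaleDecay_le hq hδ
  refine ⟨c, fun X u v huv => ?_⟩
  refine mixedNorm_le_const_mul hp (by finiteness) fun x => ?_
  calc ellNorm q (u · x) ≤ ellNorm q fun j => X * ∑' k, scaleDecay δ j k * v k x :=
        ellNorm_mono q fun j => huv j x
    _ = X * ellNorm q fun j => ∑' k, scaleDecay δ j k * v k x := ellNorm_const_mul hq _ _
    _ ≤ X * (c * ellNorm q (v · x)) := by gcongr; exact hc _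
    _ = _ := by rw [← mul_assoc, mul_comm (X : ℝ≥0∞)]; rfl

/-! ### The reproducing formula and the maximal inequality -/

/-- The multipliers `G(2^{-ka}·)` for `k ≥ 1`, with a separate symbol `G₀` for `k = 0`. -/
def dyadicMultiplier (a : Fin n → ℝ) (G₀ G : 𝓢(RV n, ℂ)) (k : ℕ) : 𝓢(RV n, ℂ) :=
  dilate a (-k) (if k = 0 then G₀ else G)

/-- The family `φ_k` of `fam`, as Schwartz functions. -/
def dyadicKernel (a : Fin n → ℝ) (φ₀ φ : 𝓢(RV n, ℂ)) (k : ℕ) : 𝓢(RV n, ℂ) :=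
  (((2 : ℝ) ^ (k * ∑ i, a i) : ℝ) : ℂ) • dilate a k (if k = 0 then φ₀ else φ)

theorem coe_dyadicKernel (a : Fin n → ℝ) (φ₀ φ : 𝓢(RV n, ℂ)) (k : ℕ) :
    ⇑(dyadicKernel a φ₀ φ k) = fam n a φ₀ φ k := by
  ext x
  rw [dyadicKernel, smul_apply, dilate_apply]
  cases k with
  | zero => simp [anisoScale_zero, fam]
  | succ k =>
    simp only [Nat.add_one_ne_zero, if_false, fam, Nat.cast_add_one, smul_eq_mul]
    congr 2

theorem schwartzFT_dyadicKernel (a : Fin n → ℝ) (φ₀ φ : 𝓢(RV n, ℂ)) (k : ℕ) :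
    schwartzFT n (dyadicKernel a φ₀ φ k) =
      dyadicMultiplier a (schwartzFT n φ₀) (schwartzFT n φ) k := by
  rw [dyadicKernel, map_smul, schwartzFT_dilate, dyadicMultiplier, apply_ite (schwartzFT n)]

theorem sum_dyadicMultiplier_mul {a : Fin n → ℝ} {χ μ₀ μ Φ₀ Φ : 𝓢(RV n, ℂ)} (h₀ : μ₀ * Φ₀ = χ)
    (h : μ * Φ = χ - dilate a 1 χ) (m : ℕ) :
    ∑ k ∈ Finset.range (m + 1), dyadicMultiplier a μ₀ μ k * dyadicMultiplier a Φ₀ Φ k =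
      dilate a (-m) χ := by
  induction m with
  | zero => simp [dyadicMultiplier, ← dilate_mul, h₀]
  | succ m ih =>
    rw [Finset.sum_range_succ, ih]
    simp only [dyadicMultiplier, Nat.add_one_ne_zero, if_false]
    rw [← dilate_mul, h, map_sub, dilate_dilate, Nat.cast_add_one, neg_add_rev,
      add_neg_cancel_left]
    abel

/-- Multiplying `𝓕ψ` by the cutoffs `χ(2^{-ma}·)` and letting `m → ∞` recovers `ψ`, and each
cutoff is a sum of products with the dyadic multipliers of `φ`. -/
theorem enorm_tempered_reflect_le_tsum {a : Fin n → ℝ} {a₀ : ℝ} (ha₀ : 0 < a₀)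
    (ha : ∀ i, a₀ ≤ a i) {φ₀ φ χ μ₀ μ : 𝓢(RV n, ℂ)} {δ : ℝ} (hδ : 0 < δ)
    (hχ : ∀ x, ‖x‖ < δ → χ x = 1) (h₀ : μ₀ * schwartzFT n φ₀ = χ)
    (h : μ * schwartzFT n φ = χ - dilate a 1 χ) (f : TD n) (ψ : 𝓢(RV n, ℂ)) (y : RV n) :
    ‖f (reflect y ψ)‖ₑ ≤ ∑' k, ∫⁻ z,
      ‖(schwartzFT n).symm (schwartzFT n ψ * dyadicMultiplier a μ₀ μ k) z‖ₑ *
        ‖f (reflect (y - z) (dyadicKernel a φ₀ φ k))‖ₑ := by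
  let T (g : 𝓢(RV n, ℂ)) : ℂ := f (reflect y ((schwartzFT n).symm g))
  have T_continuous : Continuous T :=
    f.continuous.comp ((reflect y).continuous.comp (schwartzFT n).symm.continuous)
  have approximation : Filter.Tendsto
      (fun m : ℕ => ‖T (schwartzFT n ψ * dilate a (-m) χ)‖ₑ) .atTop (nhds ‖f (reflect y ψ)‖ₑ) := by
    have := (T_continuous.enorm.tendsto _).comp ((tendsto_mul_dilate_neg ha₀ ha hδ hχ
      (schwartzFT n ψ)).comp tendsto_natCast_atTop_atTop)
    simpa only [T, ContinuousLinearEquiv.symm_apply_apply, Function.comp_def] using this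
  let K (k : ℕ) : 𝓢(RV n, ℂ) :=
    (schwartzFT n).symm (schwartzFT n ψ * dyadicMultiplier a μ₀ μ k)
  have T_partial_sum (m : ℕ) : T (schwartzFT n ψ * dilate a (-m) χ) =
      ∑ k ∈ Finset.range (m + 1), f (reflect y (schwartzConv (K k) (dyadicKernel a φ₀ φ k))) := by
    have expand : schwartzFT n ψ * dilate a (-m) χ = ∑ k ∈ Finset.range (m + 1),
        schwartzFT n (K k) * schwartzFT n (dyadicKernel a φ₀ φ k) := by
      rw [← sum_dyadicMultiplier_mul h₀ h m]
      ext x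
      simp only [schwartz_mul_apply, sum_apply, Finset.mul_sum, mul_assoc,
        schwartzFT_dyadicKernel, K, ContinuousLinearEquiv.apply_symm_apply]
    simp only [T, expand, map_sum, schwartzConv]
  refine le_of_tendsto' approximation fun m => ?_
  calc _ ≤ ∑ k ∈ Finset.range (m + 1),
        ‖f (reflect y (schwartzConv (K k) (dyadicKernel a φ₀ φ k)))‖ₑ := by
        rw [T_partial_sum]
        exact enorm_sum_le _ _
    _ ≤ ∑ k ∈ Finset.range (m + 1), ∫⁻ z, ‖K k z‖ₑ *
          ‖f (reflect (y - z) (dyadicKernel a φ₀ φ k))‖ₑ :=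
        Finset.sum_le_sum fun k _ => enorm_tempered_reflect_schwartzConv_le f _ _ y
    _ ≤ _ := ENNReal.sum_le_tsum _

theorem peetreWeight_add_le (a : Fin n → ℝ) {r : Fin n → ℝ} (hr : ∀ l, 0 ≤ r l) (u : ℝ)
    (x z : RV n) : peetreWeight a r u (x + z) ≤ peetreWeight a r u x * peetreWeight a r u z := by
  unfold peetreWeight
  rw [← Finset.prod_mul_distrib]
  refine Finset.prod_le_prod (fun l _ => by positivity) fun l _ => ?_
  rw [← Real.mul_rpow (by positivity) (by positivity)]
  refine Real.rpow_le_rpow (by positivity) ?_ (hr l)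
  set t : ℝ := 2 ^ (u * a l)
  calc 1 + t * |(x + z) l| ≤ 1 + t * (|x l| + |z l|) := by gcongr; exact abs_add_le _ _
    _ ≤ 1 + t * (|x l| + |z l|) + (t * |x l|) * (t * |z l|) :=
        le_add_of_nonneg_right (by positivity)
    _ = _ := by ring

theorem peetreWeight_le_two_rpow_mul {a r : Fin n → ℝ} (ha : ∀ l, 0 ≤ a l) (hr : ∀ l, 0 ≤ r l)
    (u v : ℝ) (z : RV n) : peetreWeight a r v z ≤
      2 ^ (max (v - u) 0 * ∑ l, a l * r l) * peetreWeight a r u z := by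
  set d := max (v - u) 0
  have hd : 0 ≤ d := le_max_right _ _
  have hv : v ≤ d + u := sub_le_iff_le_add.1 (le_max_left _ _)
  unfold peetreWeight
  rw [Finset.mul_sum, Real.rpow_sum_of_pos two_pos, ← Finset.prod_mul_distrib]
  refine Finset.prod_le_prod (fun l _ => by positivity) fun l _ => ?_
  rw [← mul_assoc, Real.rpow_mul two_pos.le (d * a l),
    ← Real.mul_rpow (by positivity) (by positivity)]
  refine Real.rpow_le_rpow (by positivity) ?_ (hr l)
  calc 1 + (2 : ℝ) ^ (v * a l) * |z l| ≤ 2 ^ (d * a l) + 2 ^ ((d + u) * a l) * |z l| := by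
        gcongr
        · exact Real.one_le_rpow one_le_two (mul_nonneg hd (ha l))
        · exact one_le_two
        · exact ha l
    _ = _ := by rw [add_mul, Real.rpow_add two_pos]; ring

theorem lintegral_peetreWeight_schwartzFT_symm_dilate (a r : Fin n → ℝ) (u v : ℝ)
    (H : 𝓢(RV n, ℂ)) :
    ∫⁻ z, ENNReal.ofReal (peetreWeight a r u z) * ‖(schwartzFT n).symm (dilate a (-v) H) z‖ₑ =
      ∫⁻ z, ENNReal.ofReal (peetreWeight a r (u - v) z) * ‖(schwartzFT n).symm H z‖ₑ := by
  have symm_dilate (z : RV n) : ‖(schwartzFT n).symm (dilate a (-v) H) z‖ₑ =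
      ENNReal.ofReal (2 ^ (v * ∑ i, a i)) * ‖(schwartzFT n).symm H (anisoScale a v z)‖ₑ := by
    have := schwartzFT_dilate a v ((schwartzFT n).symm H)
    rw [ContinuousLinearEquiv.apply_symm_apply, ← map_smul] at this
    rw [← this, ContinuousLinearEquiv.symm_apply_apply, smul_apply, enorm_smul, ← ofReal_norm,
      norm_real, Real.norm_of_nonneg (by positivity), dilate_apply]
  rw [← lintegral_comp_anisoScale a v fun z => ENNReal.ofReal (peetreWeight a r (u - v) z) *
    ‖(schwartzFT n).symm H z‖ₑ, ← lintegral_const_mul' _ _ ENNReal.ofReal_ne_top]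
  refine lintegral_congr fun z => ?_
  rw [symm_dilate, peetreWeight_anisoScale, sub_add_cancel, mul_left_comm]

theorem enorm_le_pfs_mul (a : Fin n → ℝ) {r : Fin n → ℝ} (hr : ∀ l, 0 ≤ r l) (F : RV n → ℂ)
    (k : ℕ) (x y z : RV n) :
    ‖F (y - z)‖ₑ ≤ pfs n a r F k x *
      (ENNReal.ofReal (peetreWeight a r k (x - y)) * ENNReal.ofReal (peetreWeight a r k z)) := by
  have weight_pos := peetreWeight_pos a r k (x - (y - z))
  have le_pfs : ENNReal.ofReal (‖F (y - z)‖ / peetreWeight a r k (x - (y - z))) ≤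
      pfs n a r F k x :=
    le_iSup (fun y => ENNReal.ofReal (‖F y‖ / peetreWeight a r k (x - y))) (y - z)
  calc ‖F (y - z)‖ₑ = ENNReal.ofReal (‖F (y - z)‖ / peetreWeight a r k (x - (y - z))) *
        ENNReal.ofReal (peetreWeight a r k (x - (y - z))) := by
        rw [← ENNReal.ofReal_mul (by positivity), div_mul_cancel₀ _ weight_pos.ne', ofReal_norm]
    _ ≤ _ := by
        rw [← ENNReal.ofReal_mul (peetreWeight_pos a r k _).le]
        gcongr
        rw [← sub_add]
        exact peetreWeight_add_le a hr k _ _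

theorem pfs_le_tsum_of_le_tsum_lintegral {a r : Fin n → ℝ} (ha : ∀ l, 0 ≤ a l)
    (hr : ∀ l, 0 ≤ r l) {Q : RV n → ℂ} {K F : ℕ → RV n → ℂ} (hK : ∀ k, Measurable (K k))
    (hQ : ∀ y, ‖Q y‖ₑ ≤ ∑' k, ∫⁻ z, ‖K k z‖ₑ * ‖F k (y - z)‖ₑ) (j : ℕ) (x : RV n) :
    pfs n a r Q j x ≤ ∑' k : ℕ, ENNReal.ofReal (2 ^ (max ((k : ℝ) - j) 0 * ∑ l, a l * r l)) *
      (∫⁻ z, ENNReal.ofReal (peetreWeight a r k z) * ‖K k z‖ₑ) * pfs n a r (F k) k x := by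
  refine iSup_le fun y => ?_
  change ENNReal.ofReal (‖Q y‖ / peetreWeight a r j (x - y)) ≤ _
  rw [ENNReal.ofReal_div_of_pos (peetreWeight_pos ..), ofReal_norm]
  refine ENNReal.div_le_of_le_mul ((hQ y).trans ?_)
  rw [← ENNReal.tsum_mul_right]
  refine ENNReal.tsum_le_tsum fun k => ?_
  have change_scale : ENNReal.ofReal (peetreWeight a r k (x - y)) ≤
      ENNReal.ofReal (2 ^ (max ((k : ℝ) - j) 0 * ∑ l, a l * r l)) *
        ENNReal.ofReal (peetreWeight a r j (x - y)) := by
    rw [← ENNReal.ofReal_mul (by positivity)]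
    exact ENNReal.ofReal_le_ofReal (peetreWeight_le_two_rpow_mul ha hr j k _)
  calc _ ≤ ∫⁻ z, pfs n a r (F k) k x * ENNReal.ofReal (peetreWeight a r k (x - y)) *
        (ENNReal.ofReal (peetreWeight a r k z) * ‖K k z‖ₑ) := by
        refine lintegral_mono fun z => ?_
        grw [enorm_le_pfs_mul a hr (F k) k x y z]
        exact le_of_eq (by ring)
    _ = pfs n a r (F k) k x * ENNReal.ofReal (peetreWeight a r k (x - y)) *
        ∫⁻ z, ENNReal.ofReal (peetreWeight a r k z) * ‖K k z‖ₑ :=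
        lintegral_const_mul _ ((measurable_peetreWeight a r k).ennreal_ofReal.mul (hK k).enorm)
    _ ≤ _ := by
        grw [change_scale]
        exact le_of_eq (by ring)

theorem exists_lintegral_peetreWeight_dilate_mul_dilate_le_of_le {a : Fin n → ℝ} {a₀ : ℝ}
    (ha₀ : 0 ≤ a₀) (ha : ∀ i, a₀ ≤ a i) {r : Fin n → ℝ} {N : Fin n → ℕ}
    (hN : ∀ l, r l + 2 ≤ N l) (K : ℕ) (μ : 𝓢(RV n, ℂ)) :
    ∃ c : ℝ≥0, ∀ (G : 𝓢(RV n, ℂ)) (X : ℝ≥0) (j k : ℝ), k ≤ j →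
      (k < j → ∀ γ : Fin n → ℕ, ∑ i, γ i < K → mixedDeriv γ G 0 = 0) →
      (∀ γ : Fin n → ℕ, (∑ i, γ i ≤ K ∨ γ ≤ N) → ∀ x, ‖mixedDeriv γ G x‖ ≤ X) →
      ∫⁻ z, ENNReal.ofReal (peetreWeight a r k z) *
          ‖(schwartzFT n).symm (dilate a (-j) G * dilate a (-k) μ) z‖ₑ ≤
        c * X * ENNReal.ofReal (2 ^ ((k - j) * (K * a₀))) := by
  obtain ⟨c, hc⟩ := exists_lintegral_peetreWeight_dilate_mul_le ha₀ ha hN K μ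
  refine ⟨c, fun G X j k hkj moments bound => ?_⟩
  have factor : dilate a (-j) G * dilate a (-k) μ =
      dilate a (-k) (dilate a (-(j - k)) G * μ) := by
    rw [dilate_mul, dilate_dilate]
    ring_nf
  rw [factor, lintegral_peetreWeight_schwartzFT_symm_dilate, sub_self]
  refine (hc G X (j - k) X.coe_nonneg (sub_nonneg.2 hkj) (fun h => moments (sub_pos.1 h))
    bound).trans_eq ?_
  rw [ENNReal.ofReal_mul (by positivity), ENNReal.ofReal_coe_nnreal, neg_sub]
  ring

theorem exists_lintegral_peetreWeight_dilate_mul_dilate_le_of_ge {a : Fin n → ℝ} {a₀ : ℝ}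
    (ha₀ : 0 ≤ a₀) (ha : ∀ i, a₀ ≤ a i) {r : Fin n → ℝ} (hr : ∀ l, 0 ≤ r l) {N : Fin n → ℕ}
    (hN : ∀ l, r l + 2 ≤ N l) {L : ℝ} (hL : 0 ≤ L) {μ : 𝓢(RV n, ℂ)} {ρ : ℝ} (hρ : 0 < ρ)
    (hμ : ∀ x : RV n, ‖x‖ < ρ → μ x = 0) :
    ∃ c : ℝ≥0, ∀ (G : 𝓢(RV n, ℂ)) (X : ℝ≥0∞) (j k : ℝ), j ≤ k →
      (∀ γ ≤ N, ∫⁻ ξ : RV n,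
        ENNReal.ofReal ((1 + √(∑ i, ξ i ^ 2)) ^ L) * ‖mixedDeriv γ G ξ‖ₑ ≤ X) →
      ∫⁻ z, ENNReal.ofReal (peetreWeight a r k z) *
          ‖(schwartzFT n).symm (dilate a (-j) G * dilate a (-k) μ) z‖ₑ ≤
        c * X * ENNReal.ofReal (2 ^ ((k - j) * (∑ l, a l * r l - L * a₀))) := by
  obtain ⟨c, hc⟩ := exists_lintegral_peetreWeight_mul_dilate_le ha₀ ha hN hL hρ hμ
  refine ⟨c, fun G X j k hjk bound => ?_⟩
  have factor : dilate a (-j) G * dilate a (-k) μ =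
      dilate a (-j) (G * dilate a (-(k - j)) μ) := by
    rw [dilate_mul, dilate_dilate]
    ring_nf
  have weight_le (z : RV n) : ENNReal.ofReal (peetreWeight a r (k - j) z) ≤
      ENNReal.ofReal (2 ^ ((k - j) * ∑ l, a l * r l)) * ENNReal.ofReal (peetreWeight a r 0 z) := by
    rw [← ENNReal.ofReal_mul (by positivity)]
    refine ENNReal.ofReal_le_ofReal ?_
    simpa only [sub_zero, max_eq_left (sub_nonneg.2 hjk)] using
      peetreWeight_le_two_rpow_mul (fun l => ha₀.trans (ha l)) hr 0 (k - j) z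
  rw [factor, lintegral_peetreWeight_schwartzFT_symm_dilate]
  calc _ ≤ ∫⁻ z, ENNReal.ofReal (2 ^ ((k - j) * ∑ l, a l * r l)) *
        (ENNReal.ofReal (peetreWeight a r 0 z) *
          ‖(schwartzFT n).symm (G * dilate a (-(k - j)) μ) z‖ₑ) := by
        refine lintegral_mono fun z => ?_
        grw [weight_le z, mul_assoc]
    _ ≤ ENNReal.ofReal (2 ^ ((k - j) * ∑ l, a l * r l)) *
          (c * (ENNReal.ofReal (2 ^ (-(k - j) * (L * a₀))) * X)) := by
        rw [lintegral_const_mul' _ _ ENNReal.ofReal_ne_top]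
        gcongr
        exact hc G X (k - j) (sub_nonneg.2 hjk) bound
    _ = _ := by
        have split : (2 : ℝ) ^ ((k - j) * (∑ l, a l * r l - L * a₀)) =
            2 ^ ((k - j) * ∑ l, a l * r l) * 2 ^ (-(k - j) * (L * a₀)) := by
          rw [← Real.rpow_add two_pos]
          ring_nf
        rw [split, ENNReal.ofReal_mul (by positivity)]
        ring

/-- The symbol bounds of the theorem: `X` bounds `|D^γ G|` for `|γ| ≤ K` or `γ ≤ N`, and the
integral of `(1 + |ξ|)^L |D^γ G(ξ)|` for `γ ≤ N`. -/
structure SymbolBound (N : Fin n → ℕ) (K : ℕ) (L : ℝ) (X : ℝ≥0) (G : 𝓢(RV n, ℂ)) : Prop where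
  norm_le : ∀ γ : Fin n → ℕ, (∑ i, γ i ≤ K ∨ γ ≤ N) → ∀ ξ, ‖mixedDeriv γ G ξ‖ ≤ X
  lintegral_le : ∀ γ ≤ N, ∫⁻ ξ : RV n,
    ENNReal.ofReal ((1 + √(∑ i, ξ i ^ 2)) ^ L) * ‖mixedDeriv γ G ξ‖ₑ ≤ X

theorem exists_lintegral_peetreWeight_dyadicMultiplier_le {a : Fin n → ℝ} {a₀ : ℝ}
    (ha₀ : 0 ≤ a₀) (ha : ∀ i, a₀ ≤ a i) {r : Fin n → ℝ} (hr : ∀ l, 0 ≤ r l) {N : Fin n → ℕ}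
    (hN : ∀ l, r l + 2 ≤ N l) {K : ℕ} {L : ℝ} (hL : 0 ≤ L) {s δ : ℝ} (hδK : δ ≤ K * a₀ - s)
    (hδL : δ ≤ L * a₀ + s - 2 * ∑ l, a l * r l) (μ₀ : 𝓢(RV n, ℂ)) {μ : 𝓢(RV n, ℂ)} {ρ : ℝ}
    (hρ : 0 < ρ) (hμ : ∀ x : RV n, ‖x‖ < ρ → μ x = 0) :
    ∃ c : ℝ≥0, ∀ (G₀ G : 𝓢(RV n, ℂ)) (X : ℝ≥0),
      (∀ γ : Fin n → ℕ, ∑ i, γ i < K → mixedDeriv γ G 0 = 0) →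
      SymbolBound N K L X G₀ → SymbolBound N K L X G → ∀ j k : ℕ,
      ∫⁻ z, ENNReal.ofReal (peetreWeight a r k z) *
          ‖(schwartzFT n).symm (dyadicMultiplier a G₀ G j * dyadicMultiplier a μ₀ μ k) z‖ₑ ≤
        c * X * ENNReal.ofReal (2 ^ (((k : ℝ) - j) * s -
          max ((k : ℝ) - j) 0 * ∑ l, a l * r l - δ * |(j : ℝ) - k|)) := by
  obtain ⟨c₀, low₀⟩ := exists_lintegral_peetreWeight_dilate_mul_dilate_le_of_le ha₀ ha hN K μ₀
  obtain ⟨c₁, low₁⟩ := exists_lintegral_peetreWeight_dilate_mul_dilate_le_of_le ha₀ ha hN K μ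
  obtain ⟨c₂, high⟩ :=
    exists_lintegral_peetreWeight_dilate_mul_dilate_le_of_ge ha₀ ha hr hN hL hρ hμ
  refine ⟨c₀ + c₁ + c₂, fun G₀ G X moments hG₀ hG j k => ?_⟩
  have bound : SymbolBound N K L X (if j = 0 then G₀ else G) := by split_ifs <;> assumption
  simp only [dyadicMultiplier]
  rcases le_or_gt k j with hkj | hjk
  · have hkj' : (k : ℝ) ≤ j := Nat.cast_le.2 hkj
    have moments' : (k : ℝ) < j → ∀ γ : Fin n → ℕ, ∑ i, γ i < K →
        mixedDeriv γ (if j = 0 then G₀ else G) 0 = 0 := fun hlt => by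
      rw [if_neg (Nat.ne_zero_of_lt (Nat.cast_lt.1 hlt))]
      exact moments
    have low : ∫⁻ z, ENNReal.ofReal (peetreWeight a r k z) * ‖(schwartzFT n).symm
        (dilate a (-j) (if j = 0 then G₀ else G) * dilate a (-k) (if k = 0 then μ₀ else μ)) z‖ₑ ≤
        (c₀ + c₁ : ℝ≥0) * X * ENNReal.ofReal (2 ^ (((k : ℝ) - j) * (K * a₀))) := by
      by_cases hk : k = 0
      · rw [if_pos hk]
        refine (low₀ _ X j k hkj' moments' bound.norm_le).trans ?_
        gcongr
        exact le_self_add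
      · rw [if_neg hk]
        refine (low₁ _ X j k hkj' moments' bound.norm_le).trans ?_
        gcongr
        exact le_add_self
    refine low.trans ?_
    gcongr ?_ * _ * ENNReal.ofReal (_ ^ ?_)
    · exact_mod_cast le_self_add
    · exact one_le_two
    · rw [max_eq_right (by linarith), abs_of_nonneg (by linarith)]
      linarith [mul_le_mul_of_nonneg_left hδK (sub_nonneg.2 hkj')]
  · have hjk' : (j : ℝ) ≤ k := Nat.cast_le.2 hjk.le
    rw [if_neg (Nat.ne_zero_of_lt hjk)]
    refine (high _ X j k hjk' bound.lintegral_le).trans ?_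
    gcongr ?_ * _ * ENNReal.ofReal (_ ^ ?_)
    · exact_mod_cast le_add_self
    · exact one_le_two
    · rw [max_eq_left (by linarith), abs_of_nonpos (by linarith)]
      linarith [mul_le_mul_of_nonneg_left hδL (sub_nonneg.2 hjk')]

theorem exists_pfs_reflect_le_tsum_scaleDecay {a : Fin n → ℝ} {a₀ : ℝ} (ha₀ : 0 < a₀)
    (ha : ∀ i, a₀ ≤ a i) {r : Fin n → ℝ} (hr : ∀ l, 0 ≤ r l) {N : Fin n → ℕ}
    (hN : ∀ l, r l + 2 ≤ N l) {K : ℕ} {L : ℝ} (hL : 0 ≤ L) {s δ : ℝ} (hδK : δ ≤ K * a₀ - s)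
    (hδL : δ ≤ L * a₀ + s - 2 * ∑ l, a l * r l) {anorm : RV n → ℝ} (h : IsAnorm n a anorm)
    {φ₀ φ : 𝓢(RV n, ℂ)} {ε : ℝ} (hε : 0 < ε) (hT : Tauber n anorm φ₀ φ ε) :
    ∃ c : ℝ≥0, ∀ (f : TD n) (ψ₀ ψ : 𝓢(RV n, ℂ)) (X : ℝ≥0),
      (∀ γ : Fin n → ℕ, ∑ i, γ i < K → mixedDeriv γ (schwartzFT n ψ) 0 = 0) →
      SymbolBound N K L X (schwartzFT n ψ₀) → SymbolBound N K L X (schwartzFT n ψ) →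
      ∀ (j : ℕ) (x : RV n), ENNReal.ofReal (2 ^ (j * s)) *
          pfs n a r (fun y => f (reflect y (dyadicKernel a ψ₀ ψ j))) j x ≤
        (c * X : ℝ≥0) * ∑' k, scaleDecay δ j k * (ENNReal.ofReal (2 ^ (k * s)) *
          pfs n a r (fun y => f (reflect y (dyadicKernel a φ₀ φ k))) k x) := by
  obtain ⟨χ, μ₀, μ, near_zero, h₀, h₁⟩ :=
    exists_calderon_multipliers (fun i => ha₀.trans_le (ha i)) h hε hT
  obtain ⟨ρ, hρ, near_zero⟩ := Metric.eventually_nhds_iff.1 near_zero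
  simp only [dist_zero_right] at near_zero
  obtain ⟨c, hc⟩ := exists_lintegral_peetreWeight_dyadicMultiplier_le ha₀.le ha hr hN hL hδK hδL
    μ₀ hρ fun x hx => (near_zero hx).2
  refine ⟨c, fun f ψ₀ ψ X moments hψ₀ hψ j x => ?_⟩
  let S := ∑ l, a l * r l
  let P (k : ℕ) := pfs n a r (fun y => f (reflect y (dyadicKernel a φ₀ φ k))) k x
  have exponents (k : ℕ) : (j * s : ℝ) + (max ((k : ℝ) - j) 0 * S +
      (((k : ℝ) - j) * s - max ((k : ℝ) - j) 0 * S - δ * |(j : ℝ) - k|)) =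
      -(δ * |(j : ℝ) - k|) + k * s := by ring
  grw [pfs_le_tsum_of_le_tsum_lintegral (fun l => ha₀.le.trans (ha l)) hr
    (F := fun k y => f (reflect y (dyadicKernel a φ₀ φ k)))
    (fun k => ((schwartzFT n).symm (schwartzFT n (dyadicKernel a ψ₀ ψ j) *
      dyadicMultiplier a μ₀ μ k)).continuous.measurable)
    (fun y => enorm_tempered_reflect_le_tsum ha₀ ha hρ (fun x hx => (near_zero hx).1) h₀ h₁ f
      (dyadicKernel a ψ₀ ψ j) y) j x]
  rw [schwartzFT_dyadicKernel, ← ENNReal.tsum_mul_left, ← ENNReal.tsum_mul_left]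
  refine ENNReal.tsum_le_tsum fun k => ?_
  calc _ ≤ ENNReal.ofReal (2 ^ (j * s)) * (ENNReal.ofReal (2 ^ (max ((k : ℝ) - j) 0 * S)) *
        (c * X * ENNReal.ofReal (2 ^ (((k : ℝ) - j) * s - max ((k : ℝ) - j) 0 * S -
          δ * |(j : ℝ) - k|))) * P k) := by
        gcongr
        exact hc _ _ X moments hψ₀ hψ j k
    _ = c * X * (ENNReal.ofReal (2 ^ (j * s)) * (ENNReal.ofReal (2 ^ (max ((k : ℝ) - j) 0 * S)) *
        ENNReal.ofReal (2 ^ (((k : ℝ) - j) * s - max ((k : ℝ) - j) 0 * S -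
          δ * |(j : ℝ) - k|)))) * P k := by ring
    _ = _ := by
        rw [← ENNReal.ofReal_mul (by positivity), ← ENNReal.ofReal_mul (by positivity),
          ← Real.rpow_add two_pos, ← Real.rpow_add two_pos, exponents, Real.rpow_add two_pos,
          ENNReal.ofReal_mul (by positivity), scaleDecay, ENNReal.coe_mul]
        ring

theorem exists_seqNorm_iSup_pfs_le {a : Fin n → ℝ} {a₀ : ℝ} (ha₀ : 0 < a₀)
    (ha : ∀ i, a₀ ≤ a i) {r : Fin n → ℝ} (hr : ∀ l, 0 ≤ r l) {N : Fin n → ℕ}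
    (hN : ∀ l, r l + 2 ≤ N l) {K : ℕ} {L : ℝ} (hL : 0 ≤ L) {s : ℝ} (hs : s < K * a₀)
    (hLs : 2 * ∑ l, a l * r l < L * a₀ + s) {anorm : RV n → ℝ} (h : IsAnorm n a anorm)
    {φ₀ φ : 𝓢(RV n, ℂ)} {ε : ℝ} (hε : 0 < ε) (hT : Tauber n anorm φ₀ φ ε)
    {p : Fin n → ℝ≥0∞} (hp : ∀ i, p i ≠ 0) {q : ℝ≥0∞} (hq : q ≠ 0)
    {conv : TD n → (RV n → ℂ) → RV n → ℂ}
    (hconv : ∀ (f : TD n) (g : RV n → ℂ) (x : RV n) (Ψ : 𝓢(RV n, ℂ)),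
      (∀ y, Ψ y = g (x - y)) → conv f g x = f Ψ) :
    ∃ c : ℝ≥0, ∀ (Θ : Type*) (ψ₀ ψ : Θ → 𝓢(RV n, ℂ)) (X : ℝ≥0),
      (∀ θ (γ : Fin n → ℕ), ∑ i, γ i < K → mixedDeriv γ (schwartzFT n (ψ θ)) 0 = 0) →
      (∀ θ, SymbolBound N K L X (schwartzFT n (ψ₀ θ))) →
      (∀ θ, SymbolBound N K L X (schwartzFT n (ψ θ))) → ∀ f : TD n,
      seqNorm n p q (fun j x => ENNReal.ofReal (2 ^ (j * s)) *
          ⨆ θ, pfs n a r (conv f (fam n a (ψ₀ θ) (ψ θ) j)) j x) ≤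
        c * X * seqNorm n p q (fun j x => ENNReal.ofReal (2 ^ (j * s)) *
          pfs n a r (conv f (fam n a φ₀ φ j)) j x) := by
  obtain ⟨δ, hδ, hδK, hδL⟩ : ∃ δ > 0, δ ≤ K * a₀ - s ∧ δ ≤ L * a₀ + s - 2 * ∑ l, a l * r l :=
    ⟨_, lt_min (sub_pos.2 hs) (sub_pos.2 hLs), min_le_left .., min_le_right ..⟩
  obtain ⟨c₁, pointwise⟩ :=
    exists_pfs_reflect_le_tsum_scaleDecay ha₀ ha hr hN hL hδK hδL h hε hT
  obtain ⟨c₂, hc₂⟩ := exists_seqNorm_le_of_le_tsum_scaleDecay hp hq hδ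
  refine ⟨c₂ * c₁, fun Θ ψ₀ ψ X moments hψ₀ hψ f => ?_⟩
  have conv_fam (g₀ g : 𝓢(RV n, ℂ)) (j : ℕ) : conv f (fam n a g₀ g j) =
      fun y => f (reflect y (dyadicKernel a g₀ g j)) :=
    funext fun y => hconv f _ y _ fun z => by rw [reflect_apply, coe_dyadicKernel]
  simp only [conv_fam, ENNReal.mul_iSup]
  have := hc₂ (c₁ * X) _ _ fun j x => iSup_le fun θ =>
    pointwise f (ψ₀ θ) (ψ θ) X (moments θ) (hψ₀ θ) (hψ θ) j x
  rwa [ENNReal.coe_mul, ← mul_assoc, ← ENNReal.coe_mul] at this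

/-- The constants `A` and `C` of the theorem: the supremum of `|D^α 𝓕ψ_θ|` over `θ` and over all
`α` with `|α| ≤ M_ψ + 1` or `α ≤ ⌈r + 2⌉`. -/
def symbolSup {Θ : Type*} (Mψ : ℤ) (r : Fin n → ℝ) (ψ : Θ → 𝓢(RV n, ℂ)) : ℝ≥0∞ :=
  ⨆ θ, ⨆ α : {α : Fin n → ℕ // (∑ i, (α i : ℤ)) ≤ Mψ + 1 ∨ ∀ l, α l ≤ ⌈r l + 2⌉₊}, ⨆ ξ,
    ‖Dop n α.1 (FT n (ψ θ)) ξ‖ₑ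

/-- The constants `B` and `D` of the theorem: the supremum of the `L₁` norms of
`(1 + |ξ|)^{M+1} D^γ 𝓕ψ_θ(ξ)` over `θ` and over all `γ ≤ ⌈r + 2⌉`. -/
def weightedSymbolSup {Θ : Type*} (M : ℝ) (r : Fin n → ℝ) (ψ : Θ → 𝓢(RV n, ℂ)) : ℝ≥0∞ :=
  ⨆ θ, ⨆ γ : {γ : Fin n → ℕ // ∀ l, γ l ≤ ⌈r l + 2⌉₊}, ∫⁻ ξ : RV n,
    ENNReal.ofReal ((1 + √(∑ i, ξ i ^ 2)) ^ (M + 1)) * ‖Dop n γ.1 (FT n (ψ θ)) ξ‖ₑ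

theorem symbolBound_of_symbolSup_le {Θ : Type*} {ψ : Θ → 𝓢(RV n, ℂ)} {Mψ : ℤ} {K : ℕ}
    (hK : Mψ + 1 = K) {r : Fin n → ℝ} {M : ℝ} {X : ℝ≥0} (hsup : symbolSup Mψ r ψ ≤ X)
    (hint : weightedSymbolSup M r ψ ≤ X) (θ : Θ) :
    SymbolBound (fun l => ⌈r l + 2⌉₊) K (M + 1) X (schwartzFT n (ψ θ)) where
  norm_le γ hγ ξ := by
    have hγ' : (∑ i, (γ i : ℤ)) ≤ Mψ + 1 ∨ ∀ l, γ l ≤ ⌈r l + 2⌉₊ :=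
      hγ.imp_left fun h => by rw [hK]; exact_mod_cast h
    have : ‖Dop n γ (FT n (ψ θ)) ξ‖ₑ ≤ X :=
      iSup_le_iff.1 (iSup_le_iff.1 (iSup_le_iff.1 hsup θ) ⟨γ, hγ'⟩) ξ
    rw [enorm_Dop_FT] at this
    exact_mod_cast this
  lintegral_le γ hγ := by
    have := iSup_le_iff.1 (iSup_le_iff.1 hint θ) ⟨γ, hγ⟩
    simpa only [enorm_Dop_FT] using this

theorem mixedDeriv_schwartzFT_zero_of_momentCond {ψ : 𝓢(RV n, ℂ)} {Mψ : ℤ} {K : ℕ}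
    (hK : Mψ + 1 = K) (hψ : MomentCond n Mψ ψ) {γ : Fin n → ℕ} (hγ : ∑ i, γ i < K) :
    mixedDeriv γ (schwartzFT n ψ) 0 = 0 := by
  have : Dop n γ (FT n ψ) 0 = 0 := hψ γ (Int.le_of_lt_add_one (by rw [hK]; exact_mod_cast hγ))
  rwa [← enorm_eq_zero, enorm_Dop_FT, enorm_eq_zero] at this

theorem stmt11_general {a : Fin n → ℝ} (ha : ∀ i, 0 < a i) {anorm : RV n → ℝ}
    (h : IsAnorm n a anorm) {conv : TD n → (RV n → ℂ) → RV n → ℂ}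
    (hconv : ∀ (f : TD n) (g : RV n → ℂ) (x : RV n) (Ψ : 𝓢(RV n, ℂ)),
      (∀ y, Ψ y = g (x - y)) → conv f g x = f Ψ)
    {Mψ : ℤ} (hMψ : -1 ≤ Mψ) {φ₀ φ : 𝓢(RV n, ℂ)} {ε : ℝ} (hε : 0 < ε)
    (hT : Tauber n anorm φ₀ φ ε) {p : Fin n → ℝ≥0∞} (hp : ∀ i, p i ≠ 0) {q : ℝ≥0∞} (hq : q ≠ 0)
    {s : ℝ} (hs : s < (Mψ + 1) * ⨅ i, a i) {r : Fin n → ℝ} (hr : ∀ l, 0 ≤ r l) {M : ℝ}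
    (hM : -1 ≤ M) (hMs : 2 * ∑ l, a l * r l < (M + 1) * (⨅ i, a i) + s) :
    ∃ c : ℝ, 0 < c ∧ ∀ (Θ : Type*) (ψ₀ ψ : Θ → 𝓢(RV n, ℂ)), (∀ θ, MomentCond n Mψ (ψ θ)) →
      symbolSup Mψ r ψ ≠ ∞ → weightedSymbolSup M r ψ ≠ ∞ →
      symbolSup Mψ r ψ₀ ≠ ∞ → weightedSymbolSup M r ψ₀ ≠ ∞ → ∀ f : TD n,
      seqNorm n p q (fun j x => ENNReal.ofReal (2 ^ (j * s)) *
          ⨆ θ, pfs n a r (conv f (fam n a (ψ₀ θ) (ψ θ) j)) j x) ≤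
        ENNReal.ofReal c * (symbolSup Mψ r ψ + weightedSymbolSup M r ψ +
          symbolSup Mψ r ψ₀ + weightedSymbolSup M r ψ₀) *
        seqNorm n p q (fun j x => ENNReal.ofReal (2 ^ (j * s)) *
          pfs n a r (conv f (fam n a φ₀ φ j)) j x) := by
  obtain ⟨K, hK⟩ := Int.eq_ofNat_of_zero_le (by omega : 0 ≤ Mψ + 1)
  have hK' : (Mψ : ℝ) + 1 = K := by exact_mod_cast hK
  rw [hK'] at hs
  have inf_pos : 0 < ⨅ i, a i := by
    have : 0 ≤ ∑ l, a l * r l := Finset.sum_nonneg fun l _ => mul_nonneg (ha l).le (hr l)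
    exact pos_of_mul_pos_right (by linarith : 0 < (K + (M + 1)) * ⨅ i, a i)
      (add_nonneg K.cast_nonneg (by linarith))
  obtain ⟨c, hc⟩ := exists_seqNorm_iSup_pfs_le inf_pos
    (fun i => ciInf_le (Set.finite_range a).bddBelow i) hr (fun l => Nat.le_ceil (r l + 2))
    (by linarith) hs hMs h hε hT hp hq hconv
  refine ⟨c + 1, by positivity, fun Θ ψ₀ ψ moments hA hB hC hD f => ?_⟩
  set A := symbolSup Mψ r ψ
  set B := weightedSymbolSup M r ψ
  set C := symbolSup Mψ r ψ₀
  set D := weightedSymbolSup M r ψ₀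
  obtain ⟨X, hX⟩ : ∃ X : ℝ≥0, X = A + B + C + D := ⟨_, ENNReal.coe_toNNReal (by finiteness)⟩
  have hAX : A ≤ X := by rw [hX, add_assoc, add_assoc]; exact le_self_add
  have hBX : B ≤ X := by rw [hX, add_assoc]; exact le_add_self.trans le_self_add
  have hCX : C ≤ X := by rw [hX]; exact le_add_self.trans le_self_add
  have hDX : D ≤ X := by rw [hX]; exact le_add_self
  refine (hc Θ ψ₀ ψ X
    (fun θ _ => mixedDeriv_schwartzFT_zero_of_momentCond hK (moments θ))
    (symbolBound_of_symbolSup_le hK hCX hDX) (symbolBound_of_symbolSup_le hK hAX hBX) f).trans ?_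
  rw [← hX]
  gcongr
  rw [← ENNReal.ofReal_coe_nnreal]
  exact ENNReal.ofReal_le_ofReal (by linarith)

end

/-- Theorem 3.6 (`maxmod`), the parameter-dependent maximal inequality. -/
theorem stmt11 (n : ℕ) (hn : 1 ≤ n) (a : Fin n → ℝ) (ha : ∀ i, 1 ≤ a i)
    (anorm : RV n → ℝ) (h : IsAnorm n a anorm)
    (conv : TD n → (RV n → ℂ) → RV n → ℂ)
    (hconv : ∀ (f : TD n) (g : RV n → ℂ) (x : RV n) (Ψ : SchwartzMap (RV n) ℂ),
      (∀ y, Ψ y = g (x - y)) → conv f g x = f Ψ)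
    (Mψ : ℤ) (hMψ : -1 ≤ Mψ)
    (φ0 φ : SchwartzMap (RV n) ℂ) (ε' : ℝ) (hε' : 0 < ε')
    (hT : Tauber n anorm (⇑φ0) (⇑φ) ε')
    (p : Fin n → ℝ≥0∞) (hp : ∀ i, 0 < p i ∧ p i ≠ ∞) (q : ℝ≥0∞) (hq : 0 < q)
    (s : ℝ) (hs : s < ((Mψ:ℝ) + 1) * ⨅ i, a i)
    (r : Fin n → ℝ) (hr : ∀ l, 0 < r l)
    (M : ℤ) (hM : -1 ≤ M)
    (hMs : 2 * ∑ l, a l * r l < ((M:ℝ) + 1) * (⨅ i, a i) + s) :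
    ∃ c : ℝ, 0 < c ∧
      ∀ (Θ : Type) (ψθ0 ψθ : Θ → SchwartzMap (RV n) ℂ),
        (∀ θ, MomentCond n Mψ (⇑(ψθ θ))) →
        ∀ A B C D : ℝ≥0∞,
          A = (⨆ θ : Θ,
                ⨆ α : {α : Fin n → ℕ // (∑ i, (α i : ℤ)) ≤ Mψ + 1 ∨ ∀ l, α l ≤ ⌈r l + 2⌉₊},
                  ⨆ ξ : RV n, (‖Dop n α.1 (FT n ⇑(ψθ θ)) ξ‖₊ : ℝ≥0∞)) →
          B = (⨆ θ : Θ, ⨆ γ : {γ : Fin n → ℕ // ∀ l, γ l ≤ ⌈r l + 2⌉₊},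
                ∫⁻ ξ : RV n,
                  ENNReal.ofReal ((1 + Real.sqrt (∑ i, ξ i ^ 2)) ^ ((M:ℝ) + 1)) *
                    (‖Dop n γ.1 (FT n ⇑(ψθ θ)) ξ‖₊ : ℝ≥0∞)) →
          C = (⨆ θ : Θ,
                ⨆ α : {α : Fin n → ℕ // (∑ i, (α i : ℤ)) ≤ Mψ + 1 ∨ ∀ l, α l ≤ ⌈r l + 2⌉₊},
                  ⨆ ξ : RV n, (‖Dop n α.1 (FT n ⇑(ψθ0 θ)) ξ‖₊ : ℝ≥0∞)) →
          D = (⨆ θ : Θ, ⨆ γ : {γ : Fin n → ℕ // ∀ l, γ l ≤ ⌈r l + 2⌉₊},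
                ∫⁻ ξ : RV n,
                  ENNReal.ofReal ((1 + Real.sqrt (∑ i, ξ i ^ 2)) ^ ((M:ℝ) + 1)) *
                    (‖Dop n γ.1 (FT n ⇑(ψθ0 θ)) ξ‖₊ : ℝ≥0∞)) →
          A ≠ ∞ → B ≠ ∞ → C ≠ ∞ → D ≠ ∞ →
          ∀ f : TD n,
            seqNorm n p q
                (fun j x => ENNReal.ofReal ((2:ℝ) ^ ((j:ℝ) * s)) *
                  ⨆ θ : Θ, pfs n a r (conv f (fam n a (⇑(ψθ0 θ)) (⇑(ψθ θ)) j)) j x)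
              ≤ ENNReal.ofReal c * (A + B + C + D) *
                seqNorm n p q
                  (fun j x => ENNReal.ofReal ((2:ℝ) ^ ((j:ℝ) * s)) *
                    pfs n a r (conv f (fam n a (⇑φ0) (⇑φ) j)) j x) := by
  obtain ⟨c, hc, H⟩ := stmt11_general (fun i => one_pos.trans_le (ha i)) h hconv hMψ hε' hT
    (fun i => (hp i).1.ne') hq.ne' hs (fun l => (hr l).le) (by exact_mod_cast hM) hMs
  exact ⟨c, hc, by rintro Θ ψ₀ ψ moments _ _ _ _ rfl rfl rfl rfl; exact H Θ ψ₀ ψ moments⟩
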